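/- arXiv:1102.4199 — 2 statements merged into one kernel-verified Lean document; each statement's English description precedes it below -/
import Mathlib

section
/- Set D = ln κ / ln(κ/a) and ν = ln(κ/a). For Λ > 0 let N(Λ) denote the number of eigenvalues in (0, Λ] of the Dirichlet problem y(0) = y(1) = 0 for the equation −y'' − λρy = 0 with weight ρ the distributional derivative of the Cantor-type self-similar function P with parameters κ, a, b; assume N(Λ) is finite for every Λ > 0. Suppose s : ℝ → ℝ is a continuous ν-periodic function such that N(Λ) = Λ^D·(s(ln Λ) + o(1)) as Λ → +∞. Then s is not a constant function. -/
open MeasureTheory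

/-- A continuous function `f : [0,1] → ℝ` is a *self-similar function of Cantor type*
with parameters `κ`, `a`, `b` if `f 0 = 0`, `f 1 = 1`, `f` is constant on each interval
`(α_{2k-1}, α_{2k})` for `k ∈ {1, …, κ-1}` (where `α_{2k} = k(a+b)`, `α_{2k+1} = α_{2k} + a`),
and for each `k ∈ {0, …, κ-1}` the function `x ↦ κ·f(α_{2k} + a·x)` differs from `f`
by an additive constant. -/
def CantorType (κ : ℕ) (a b : ℝ) (f : ℝ → ℝ) : Prop :=
  ContinuousOn f (Set.Icc 0 1) ∧ f 0 = 0 ∧ f 1 = 1 ∧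
  (∀ k : ℕ, 1 ≤ k → k ≤ κ - 1 →
    ∃ c : ℝ, ∀ x ∈ Set.Ioo (((k : ℝ) - 1) * (a + b) + a) ((k : ℝ) * (a + b)), f x = c) ∧
  (∀ k : ℕ, k ≤ κ - 1 → ∃ c : ℝ, ∀ x ∈ Set.Icc (0 : ℝ) 1,
    (κ : ℝ) * f ((k : ℝ) * (a + b) + a * x) = f x + c)

/-- `lam` is an eigenvalue of the Dirichlet problem `-y'' - λ ρ y = 0`, `y(0) = y(1) = 0`,
where `ρ` is the distributional derivative of the function whose Lebesgue–Stieltjes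
measure is `μ`. -/
def IsDirichletEigen (μ : Measure ℝ) (lam : ℝ) : Prop :=
  ∃ y g : ℝ → ℝ, ContinuousOn y (Set.Icc 0 1) ∧ ContinuousOn g (Set.Icc 0 1) ∧
    (∃ x ∈ Set.Icc (0 : ℝ) 1, y x ≠ 0) ∧
    (∀ x ∈ Set.Icc (0 : ℝ) 1, y x = y 0 + ∫ t in (0 : ℝ)..x, g t) ∧
    (∀ x ∈ Set.Icc (0 : ℝ) 1, g x = g 0 - lam * ∫ t in Set.Icc (0 : ℝ) x, y t ∂μ) ∧
    y 0 = 0 ∧ y 1 = 0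

/-!
The transfer matrix of the string at `κ / a * l` is, up to gaps, the `κ`-th power of the one at
`l`, so its entries are Chebyshev polynomials in half the trace at `l`. Call two Neumann points a
pair if the cosine-type solution takes opposite values `±1` there. Multiplied by `κ / a`, a pair
splits into `κ` adjacent pairs, and it encloses a Dirichlet eigenvalue. Hence a pair `(u, v)`
rescaled by `(κ / a) ^ (j + 1)` encloses at least `κ ^ j` eigenvalues, and if `N(Λ) / Λ ^ D → c`,
then `1 / κ ≤ c (v ^ D - u ^ D)` for every pair.

This is contradicted by pairs that are arbitrarily close in the scale `x ↦ x ^ D`. At suitable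
Neumann points `p > 0`, half the trace leaves `±1` linearly to the right of `p`, so at distance of
order `κ ^ (-2 n)` its angle is already of order `κ ^ (-n)`. Each multiplication by `κ / a`
multiplies the angle by at least `κ`, and so at most `n + 1` of them turn `p` and some point at
that distance into a pair. As `(κ / a) ^ D = κ`, its length in the scale `x ↦ x ^ D` is of order at
most `κ ^ n * κ ^ (-2 n)`.
-/

open Real Filter Topology

/-! ### Chebyshev polynomials -/

section Chebyshev

open Polynomial Polynomial.Chebyshev

section CommRing

variable {R : Type*} [CommRing R]

theorem chebyshev_T_eval_mul_of_sq_eq_one {s : R} (hs : s ^ 2 = 1) (x : R) (n : ℕ) :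
    (T R n).eval (s * x) = s ^ n * (T R n).eval x := by
  induction n using Nat.twoStepInduction with
  | zero => simp
  | one => simp
  | more n ih ih' =>
    push_cast at ih ih' ⊢
    simp only [T_add_two, eval_sub, eval_mul, eval_ofNat, eval_X, ih, ih']
    linear_combination (s ^ n * (T R n).eval x) * hs

theorem mul_chebyshev_U_eval_mul_of_sq_eq_one {s : R} (hs : s ^ 2 = 1) (x : R) (n : ℕ) :
    s * (U R (n - 1)).eval (s * x) = s ^ n * (U R (n - 1)).eval x := by
  induction n using Nat.twoStepInduction with
  | zero => simp
  | one => simp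
  | more n ih ih' =>
    have hrec : U R ((n + 2 : ℕ) - 1) = 2 * X * U R ((n + 1 : ℕ) - 1) - U R (n - 1) := by
      rw [show ((n + 2 : ℕ) : ℤ) - 1 = n - 1 + 2 by push_cast; ring, U_add_two]
      congr 3
      push_cast
      ring
    simp only [hrec, eval_sub, eval_mul, eval_ofNat, eval_X]
    linear_combination 2 * s * x * ih' - ih + (s ^ n * (U R (n - 1)).eval x) * hs

theorem matrix_fin_two_pow_eq_chebyshev {M : Matrix (Fin 2) (Fin 2) R} {t : R}
    (hdet : M.det = 1) (htrace : M.trace = 2 * t) (n : ℕ) :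
    M ^ n = (U R (n - 1)).eval t • M - (U R (n - 2)).eval t • 1 := by
  have cayley_hamilton : M * M = (2 * t) • M - 1 := by
    rw [Matrix.det_fin_two] at hdet
    rw [Matrix.trace_fin_two] at htrace
    ext i j
    fin_cases i <;> fin_cases j <;> simp [Matrix.mul_apply, Fin.sum_univ_two] <;>
      grind
  induction n with
  | zero => simp
  | succ n ih =>
    have hrec : (U R n).eval t = 2 * t * (U R (n - 1)).eval t - (U R (n - 2)).eval t := by
      simp [U_eq R n]
    rw [pow_succ, ih, sub_mul, smul_mul_assoc, cayley_hamilton]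
    push_cast
    rw [add_sub_cancel_right, show (n : ℤ) + 1 - 2 = n - 1 by ring, hrec, smul_mul_assoc, one_mul]
    module

end CommRing

variable {n : ℕ}

theorem chebyshev_T_eval_cos_natCast_mul_pi_div (hn : n ≠ 0) (j : ℕ) :
    (T ℝ n).eval (cos (j * π / n)) = (-1) ^ j := by
  rw [T_real_cos, ← cos_nat_mul_pi]
  congr 1
  push_cast
  field_simp

theorem chebyshev_U_eval_cos_natCast_mul_pi_div {j : ℕ} (hj : 0 < j) (hjn : j < n) :
    (U ℝ (n - 1)).eval (cos (j * π / n)) = 0 := by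
  have hn : (0 : ℝ) < n := by exact_mod_cast hj.trans hjn
  have : (0 : ℝ) < j := by exact_mod_cast hj
  have hsin : 0 < sin (j * π / n) := by
    refine sin_pos_of_pos_of_lt_pi (by positivity) ?_
    rw [div_lt_iff₀ hn, mul_comm]
    gcongr
  have hmul := U_real_cos (j * π / n) (n - 1)
  rw [show ((n - 1 : ℤ) : ℝ) + 1 = n by push_cast; ring,
    mul_div_cancel₀ _ hn.ne', sin_nat_mul_pi] at hmul
  exact (mul_eq_zero.mp hmul).resolve_right hsin.ne'

theorem chebyshev_U_eval_mul_cos_eq_zero {s : ℝ} (hs : s ^ 2 = 1) {j : ℕ} (hj : 0 < j)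
    (hjn : j < n) : (U ℝ (n - 1)).eval (s * cos (j * π / n)) = 0 := by
  have h := mul_chebyshev_U_eval_mul_of_sq_eq_one hs (cos (j * π / n)) n
  rw [chebyshev_U_eval_cos_natCast_mul_pi_div hj hjn, mul_zero] at h
  refine (mul_eq_zero.mp h).resolve_left ?_
  rintro rfl
  norm_num at hs

theorem antitoneOn_cos_natCast_mul_pi_div (hn : n ≠ 0) :
    AntitoneOn (fun j : ℕ => cos (j * π / n)) (Set.Iic n) := fun i _ j hj hij => by
  have hn' : (0 : ℝ) < n := by exact_mod_cast Nat.pos_of_ne_zero hn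
  have hj' : (j : ℝ) ≤ n := by exact_mod_cast hj
  refine cos_le_cos_of_nonneg_of_le_pi (by positivity) ?_ (by gcongr)
  rw [div_le_iff₀ hn', mul_comm]
  gcongr

theorem exists_cos_eq_of_cos_pi_div_le {x : ℝ} (hn : n ≠ 0) (hx : cos (π / n) ≤ x) (hx1 : x ≤ 1) :
    ∃ θ, 0 ≤ θ ∧ θ ≤ π / n ∧ cos θ = x := by
  have hn' : (1 : ℝ) ≤ n := by exact_mod_cast Nat.one_le_iff_ne_zero.mpr hn
  refine ⟨arccos x, arccos_nonneg x, ?_, cos_arccos ((neg_one_le_cos _).trans hx) hx1⟩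
  rw [← arccos_cos (x := π / n) (by positivity) (div_le_self pi_pos.le hn')]
  exact arccos_le_arccos hx

theorem chebyshev_U_eval_nonneg {x : ℝ} (hn : 2 ≤ n) (hx : cos (π / n) ≤ x) (hx1 : x ≤ 1) :
    0 ≤ (U ℝ (n - 1)).eval x := by
  obtain ⟨θ, hθ0, hθ, rfl⟩ := exists_cos_eq_of_cos_pi_div_le (by lia) hx hx1
  have hn' : (2 : ℝ) ≤ n := by exact_mod_cast hn
  rcases hθ0.eq_or_lt with rfl | hθpos
  · simp
  have hsin : 0 < sin θ :=
    sin_pos_of_pos_of_lt_pi hθpos (hθ.trans_lt (div_lt_self pi_pos (by linarith)))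
  refine nonneg_of_mul_nonneg_left ?_ hsin
  rw [U_real_cos]
  push_cast
  rw [sub_add_cancel]
  refine sin_nonneg_of_nonneg_of_le_pi (by positivity) ?_
  rwa [le_div_iff₀' (by linarith)] at hθ

theorem chebyshev_T_eval_le_cos {x θ : ℝ} (hn : n ≠ 0) (hx : cos (π / n) ≤ x) (hθ0 : 0 ≤ θ)
    (hxθ : x ≤ cos θ) (hθ : θ ≤ π) : (T ℝ n).eval x ≤ cos (n * θ) := by
  obtain ⟨φ, hφ0, hφ, rfl⟩ := exists_cos_eq_of_cos_pi_div_le hn hx (hxθ.trans (cos_le_one θ))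
  have hn' : (0 : ℝ) < n := by exact_mod_cast Nat.pos_of_ne_zero hn
  have hθφ : θ ≤ φ := by
    by_contra! h
    exact (cos_lt_cos_of_nonneg_of_le_pi hφ0 hθ h).not_ge hxθ
  rw [T_real_cos]
  refine cos_le_cos_of_nonneg_of_le_pi (by positivity) ?_ (by push_cast; gcongr)
  rw [le_div_iff₀' hn'] at hφ
  exact_mod_cast hφ

end Chebyshev

/-! ### Resolvents, scaling relations and power growth -/

section Analysis

open scoped Nat

theorem isUnit_one_sub_of_norm_pow_lt_one {R : Type*} [NormedRing R] [HasSummableGeomSeries R]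
    {x : R} {n : ℕ} (h : ‖x ^ n‖ < 1) : IsUnit (1 - x) := by
  have hcomm : Commute (1 - x) (∑ i ∈ Finset.range n, x ^ i) :=
    Commute.sum_right _ _ _ fun i _ =>
      (Commute.one_left _).sub_left ((Commute.refl x).pow_right i)
  have hunit := isUnit_one_sub_of_norm_lt_one h
  rw [← mul_neg_geom_sum, hcomm.isUnit_mul_iff] at hunit
  exact hunit.1

section Resolvent

variable {A : Type*} [NormedRing A] [NormedAlgebra ℝ A] [CompleteSpace A] {x : A} {c : ℝ}

theorem isUnit_one_add_smul_of_norm_pow_le (hx : ∀ n : ℕ, ‖x ^ n‖ ≤ c ^ n / n !) (l : ℝ) :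
    IsUnit (1 + l • x) := by
  have hlim := FloorSemiring.tendsto_pow_div_factorial_atTop (|l| * c)
  obtain ⟨n, hn⟩ := (hlim.eventually_lt_const one_pos).exists
  rw [← sub_neg_eq_add, ← neg_smul]
  refine isUnit_one_sub_of_norm_pow_lt_one (n := n) (lt_of_le_of_lt ?_ hn)
  rw [smul_pow, norm_smul, norm_pow, Real.norm_eq_abs, abs_neg, mul_pow, mul_div_assoc]
  gcongr
  exact hx n

theorem continuous_inverse_one_add_smul (hx : ∀ l : ℝ, IsUnit (1 + l • x)) :
    Continuous fun l : ℝ => Ring.inverse (1 + l • x) := by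
  refine continuous_iff_continuousAt.mpr fun l => ?_
  obtain ⟨U, hU⟩ := hx l
  have hcont := NormedRing.inverse_continuousAt U
  rw [hU] at hcont
  exact hcont.comp (f := fun l : ℝ => 1 + l • x) (by fun_prop)

end Resolvent

theorem eq_zero_of_eq_mul_succ_of_tendsto {e c : ℕ → ℝ} {L ρ : ℝ}
    (he : ∀ n, e n = c n * e (n + 1)) (he_lim : Tendsto e atTop (𝓝 L))
    (hc_lim : Tendsto c atTop (𝓝 ρ)) (hρ : |ρ| < 1) : e 0 = 0 := by
  have hL : L = 0 := by
    have hfix : L = ρ * L :=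
      tendsto_nhds_unique (he_lim.congr he) (hc_lim.mul (he_lim.comp (tendsto_add_atTop_nat 1)))
    have hne : 1 - ρ ≠ 0 := (sub_pos.mpr (abs_lt.mp hρ).2).ne'
    exact (mul_eq_zero.mp (by linear_combination hfix : (1 - ρ) * L = 0)).resolve_left hne
  obtain ⟨m, hm⟩ := eventually_atTop.mp (hc_lim.abs.eventually_lt_const hρ)
  have hmono : MonotoneOn (fun n => |e n|) (Set.Ici m) := by
    refine monotoneOn_nat_Ici_of_le_succ fun n hn => ?_
    rw [he, abs_mul]
    exact mul_le_of_le_one_left (abs_nonneg _) (hm n hn).le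
  have hem : e m = 0 := by
    have habs : Tendsto (fun n => |e n|) atTop (𝓝 0) := by simpa [hL] using he_lim.abs
    refine abs_nonpos_iff.mp (ge_of_tendsto habs ?_)
    filter_upwards [eventually_ge_atTop m] with n hn
    exact hmono Set.self_mem_Ici hn hn
  exact Nat.decreasingInduction (motive := fun n _ => e n = 0)
    (fun n _ ih => by rw [he, ih, mul_zero]) hem (Nat.zero_le m)

theorem eq_zero_of_map_mul_eq_mul {d h q : ℝ → ℝ} {r : ℝ} (hr : 1 < r)
    (hd : ∀ x, d x = x * h x) (hh : ContinuousAt h 0) (hq : ContinuousAt q 0) (hq0 : |q 0| < r)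
    (hscale : ∀ x, d (r * x) = q x * d x) (x : ℝ) : d x = 0 := by
  have hr0 : 0 < r := one_pos.trans hr
  have hlim : Tendsto (fun n : ℕ => x / r ^ n) atTop (𝓝 0) :=
    tendsto_const_nhds.div_atTop (tendsto_pow_atTop_atTop_of_one_lt hr)
  have hstep (n : ℕ) : r ^ n * d (x / r ^ n) =
      q (x / r ^ (n + 1)) / r * (r ^ (n + 1) * d (x / r ^ (n + 1))) := by
    have : x / r ^ n = r * (x / r ^ (n + 1)) := by rw [pow_succ]; field_simp
    rw [this, hscale, pow_succ]
    field_simp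
  have hscaled_lim : Tendsto (fun n : ℕ => r ^ n * d (x / r ^ n)) atTop (𝓝 (x * h 0)) := by
    refine (tendsto_const_nhds.mul (hh.tendsto.comp hlim)).congr fun n => ?_
    rw [hd, Function.comp_apply]
    field_simp
  have hq_lim : Tendsto (fun n : ℕ => q (x / r ^ (n + 1)) / r) atTop (𝓝 (q 0 / r)) :=
    (hq.tendsto.comp (hlim.comp (tendsto_add_atTop_nat 1))).div_const r
  have hq_lt : |q 0 / r| < 1 := by rwa [abs_div, abs_of_pos hr0, div_lt_one hr0]
  simpa using eq_zero_of_eq_mul_succ_of_tendsto hstep hscaled_lim hq_lim hq_lt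

theorem exists_monotone_chain_of_antitoneOn {f : ℝ → ℝ} (hf : Continuous f) {h : ℕ → ℝ} {n : ℕ}
    (hn : 0 < n) (hh : AntitoneOn h (Set.Iic n)) {u v : ℝ} (huv : u ≤ v) (hu : f u = h 0)
    (hv : f v = h n) :
    ∃ q : ℕ → ℝ, Monotone q ∧ q 0 = u ∧ q n = v ∧ ∀ i ≤ n, f (q i) = h i := by
  induction n, hn using Nat.le_induction generalizing v with
  | base =>
    refine ⟨fun i => if i = 0 then u else v, monotone_nat_of_le_succ fun i => ?_, by simp,
      by simp, fun i hi => ?_⟩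
    · by_cases hi : i = 0 <;> simp [hi, huv]
    · interval_cases i <;> simp [hu, hv]
  | succ n hn ih =>
    have hmem : h n ∈ Set.Icc (f v) (f u) := by
      rw [hu, hv]
      exact ⟨hh (by simp) (by simp) (by lia), hh (by simp) (by simp) (by lia)⟩
    obtain ⟨w, hw, hfw⟩ := intermediate_value_Icc' huv hf.continuousOn hmem
    obtain ⟨q, hq_mono, hq0, hqn, hq⟩ := ih (hh.mono (Set.Iic_subset_Iic.mpr (by lia))) hw.1 hfw
    refine ⟨fun i => if i ≤ n then q i else v, monotone_nat_of_le_succ fun i => ?_, by simp [hq0],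
      by simp, fun i hi => ?_⟩
    · rcases lt_trichotomy i n with hi | rfl | hi
      · simp [hi.le, Nat.succ_le_of_lt hi, hq_mono i.le_succ]
      · simp [hqn, hw.2]
      · simp [hi.not_ge, (hi.trans i.lt_succ_self).not_ge]
    · rcases hi.eq_or_lt with rfl | hi'
      · simp [hv]
      · simpa [Nat.lt_succ_iff.mp hi'] using hq i (by lia)

theorem add_rpow_sub_rpow_le {x ε D : ℝ} (hx : 0 < x) (hε : 0 ≤ ε) (hD1 : D ≤ 1) :
    (x + ε) ^ D - x ^ D ≤ x ^ D * (ε / x) := by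
  have hbern : (1 + ε / x) ^ D ≤ 1 + ε / x :=
    rpow_le_self_of_one_le (le_add_of_nonneg_right (by positivity)) hD1
  have hfac : x + ε = x * (1 + ε / x) := by field_simp
  rw [hfac, mul_rpow hx.le (by positivity)]
  have := mul_le_mul_of_nonneg_left hbern (rpow_nonneg hx.le D)
  linarith

theorem tendsto_pow_mul_div_pow {N : ℝ → ℝ} {c D r k : ℝ} (hr : 1 < r) (hrk : r ^ D = k)
    (hN : Tendsto (fun x => N x / x ^ D) atTop (𝓝 c)) {u : ℝ} (hu : 0 < u) :
    Tendsto (fun j : ℕ => N (r ^ j * u) / k ^ j) atTop (𝓝 (c * u ^ D)) := by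
  have hr0 : 0 < r := one_pos.trans hr
  have hlim : Tendsto (fun j : ℕ => r ^ j * u) atTop atTop :=
    (tendsto_pow_atTop_atTop_of_one_lt hr).atTop_mul_const hu
  refine ((hN.comp hlim).mul_const (u ^ D)).congr fun j => ?_
  have hpow : (r ^ j * u) ^ D = k ^ j * u ^ D := by
    rw [mul_rpow (by positivity) hu.le, ← rpow_pow_comm hr0.le, hrk]
  have huD : u ^ D ≠ 0 := (rpow_pos_of_pos hu D).ne'
  rw [Function.comp_apply, hpow, ← div_div, div_mul_cancel₀ _ huD]

end Analysis

/-! ### The string equation on the unit interval -/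

namespace KreinString

open unitInterval
open scoped Nat

variable (μ : Measure I) [IsFiniteMeasure μ]

theorem integrable_of_continuous {f : I → ℝ} (hf : Continuous f) : Integrable f μ :=
  hf.integrable_of_hasCompactSupport (HasCompactSupport.of_compactSpace _)

theorem integral_add_of_continuous {f g : I → ℝ} (hf : Continuous f) (hg : Continuous g) :
    ∫ x, (f x + g x) ∂μ = ∫ x, f x ∂μ + ∫ x, g x ∂μ :=
  integral_add (integrable_of_continuous μ hf) (integrable_of_continuous μ hg)

theorem integral_sub_of_continuous {f g : I → ℝ} (hf : Continuous f) (hg : Continuous g) :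
    ∫ x, (f x - g x) ∂μ = ∫ x, f x ∂μ - ∫ x, g x ∂μ :=
  integral_sub (integrable_of_continuous μ hf) (integrable_of_continuous μ hg)

theorem continuous_integral_of_continuous_uncurry {X : Type*} [TopologicalSpace X]
    [FirstCountableTopology X] [LocallyCompactSpace X] {f : X → I → ℝ}
    (hf : Continuous f.uncurry) : Continuous fun x => ∫ t, f x t ∂μ := by
  simpa using continuous_parametric_integral_of_continuous (μ := μ) hf isCompact_univ

/-- The operator `y ↦ ∫ (x - t)⁺ y(t) dμ(t)`, the inverse of `y ↦ y''` (with respect to `μ`) under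
vanishing initial data. -/
noncomputable def volterra : C(I, ℝ) →L[ℝ] C(I, ℝ) :=
  LinearMap.mkContinuous
    { toFun y := ⟨fun x => ∫ t : I, max (x - t : ℝ) 0 * y t ∂μ,
        continuous_integral_of_continuous_uncurry μ (by fun_prop)⟩
      map_add' y z := by
        ext x
        simp only [ContinuousMap.coe_mk, ContinuousMap.add_apply, mul_add]
        exact integral_add_of_continuous μ (by fun_prop) (by fun_prop)
      map_smul' c y := by
        ext x
        simp [mul_left_comm, integral_const_mul] }
    (μ.real Set.univ) fun y => by
      refine (ContinuousMap.norm_le _ (by positivity)).mpr fun x => ?_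
      rw [mul_comm]
      refine norm_integral_le_of_norm_le_const (.of_forall fun t => ?_)
      rw [norm_mul, norm_of_nonneg (le_max_right _ _)]
      refine (mul_le_of_le_one_left (norm_nonneg _) ?_).trans (y.norm_coe_le_norm t)
      exact max_le (by linarith [x.2.2, t.2.1]) zero_le_one

theorem volterra_apply (y : C(I, ℝ)) (x : I) :
    volterra μ y x = ∫ t : I, max (x - t : ℝ) 0 * y t ∂μ := rfl

theorem volterra_apply_zero (y : C(I, ℝ)) : volterra μ y 0 = 0 := by
  simp [volterra_apply, fun t : I => t.2.1]

theorem volterra_apply_one (y : C(I, ℝ)) :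
    volterra μ y 1 = ∫ t, y t ∂μ - ∫ t : I, (t : ℝ) * y t ∂μ := by
  rw [volterra_apply, ← integral_sub_of_continuous μ (by fun_prop) (by fun_prop)]
  refine integral_congr_ae (.of_forall fun t => ?_)
  simp only [Set.Icc.coe_one, max_eq_left (sub_nonneg.mpr t.2.2), sub_mul, one_mul]

theorem max_sub_zero_mul_pow_le {x t : ℝ} (hx : 0 ≤ x) (ht : 0 ≤ t) (n : ℕ) :
    max (x - t) 0 * t ^ n ≤ x ^ (n + 1) / (n + 1) := by
  rcases le_total x t with hxt | htx
  · rw [max_eq_right (sub_nonpos.mpr hxt), zero_mul]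
    positivity
  rw [max_eq_left (sub_nonneg.mpr htx), le_div_iff₀ (by positivity)]
  have hsum : t ^ n * (n + 1) ≤ ∑ i ∈ Finset.range (n + 1), x ^ i * t ^ (n - i) := by
    have hterm (i) (hi : i ∈ Finset.range (n + 1)) : t ^ n ≤ x ^ i * t ^ (n - i) := by
      rw [← pow_mul_pow_sub t (Finset.mem_range_succ_iff.mp hi)]
      gcongr
    simpa [mul_comm] using Finset.card_nsmul_le_sum _ _ _ hterm
  have hgeom := (Commute.all x t).geom_sum₂_mul (n + 1)
  simp only [add_tsub_cancel_right] at hgeom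
  have := mul_le_mul_of_nonneg_left hsum (sub_nonneg.mpr htx)
  nlinarith [pow_nonneg ht (n + 1)]

theorem abs_volterra_pow_apply_le (n : ℕ) (y : C(I, ℝ)) (x : I) :
    |(volterra μ ^ n) y x| ≤ μ.real Set.univ ^ n * ‖y‖ * x ^ n / n ! := by
  induction n generalizing x with
  | zero => simpa using y.norm_coe_le_norm x
  | succ n ih =>
    have hbound (t : I) : ‖max (x - t : ℝ) 0 * (volterra μ ^ n) y t‖ ≤
        μ.real Set.univ ^ n * ‖y‖ * x ^ (n + 1) / (n + 1)! := by
      have hker := max_sub_zero_mul_pow_le x.2.1 t.2.1 n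
      calc ‖max (x - t : ℝ) 0 * (volterra μ ^ n) y t‖
          ≤ max (x - t : ℝ) 0 * (μ.real Set.univ ^ n * ‖y‖ * t ^ n / n !) := by
            rw [norm_mul, norm_of_nonneg (le_max_right _ _)]
            gcongr
            exact ih t
        _ = μ.real Set.univ ^ n * ‖y‖ / n ! * (max (x - t : ℝ) 0 * t ^ n) := by ring
        _ ≤ μ.real Set.univ ^ n * ‖y‖ / n ! * (x ^ (n + 1) / (n + 1)) := by gcongr
        _ = μ.real Set.univ ^ n * ‖y‖ * x ^ (n + 1) / (n + 1)! := by
            push_cast [Nat.factorial_succ]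
            field_simp
    rw [_root_.pow_succ', mul_apply_eq_comp, volterra_apply]
    refine (norm_integral_le_of_norm_le_const (.of_forall hbound)).trans_eq ?_
    ring

theorem norm_volterra_pow_le (n : ℕ) : ‖volterra μ ^ n‖ ≤ μ.real Set.univ ^ n / n ! := by
  refine ContinuousLinearMap.opNorm_le_bound _ (by positivity) fun y => ?_
  refine (ContinuousMap.norm_le _ (by positivity)).mpr fun x => ?_
  refine (abs_volterra_pow_apply_le μ n y x).trans ?_
  rw [div_mul_eq_mul_div]
  gcongr ?_ / _
  exact mul_le_of_le_one_right (by positivity) (pow_le_one₀ x.2.1 x.2.2)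

theorem isUnit_one_add_smul_volterra (l : ℝ) : IsUnit (1 + l • volterra μ) :=
  isUnit_one_add_smul_of_norm_pow_le (A := C(I, ℝ) →L[ℝ] C(I, ℝ)) (norm_volterra_pow_le μ) l

/-- The integrated form of the initial value problem `-y'' = l μ y`, `y 0 = y₀`, `y' 0 = g₀`. -/
def IsSolution (l y₀ g₀ : ℝ) (y : C(I, ℝ)) : Prop :=
  ∀ x : I, y x = y₀ + g₀ * x - l * volterra μ y x

/-- The solution of `-y'' = l μ y` with `y 0 = y₀`, `y' 0 = g₀`. -/
noncomputable def solution (l y₀ g₀ : ℝ) : C(I, ℝ) :=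
  Ring.inverse (1 + l • volterra μ) (y₀ • 1 + g₀ • ⟨fun x => x, by fun_prop⟩)

variable {μ} {l p y₀ g₀ : ℝ} {y : C(I, ℝ)}

theorem isSolution_iff_eq_solution : IsSolution μ l y₀ g₀ y ↔ y = solution μ l y₀ g₀ := by
  set data : C(I, ℝ) := y₀ • 1 + g₀ • ⟨fun x => x, by fun_prop⟩ with hdata
  have hunit := isUnit_one_add_smul_volterra μ l
  have hiff : IsSolution μ l y₀ g₀ y ↔ (1 + l • volterra μ) y = data := by
    simp [IsSolution, ContinuousMap.ext_iff, hdata, eq_sub_iff_add_eq]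
  rw [hiff, solution, ← hdata]
  constructor
  · intro h
    rw [← h, ← mul_apply_eq_comp, Ring.inverse_mul_cancel _ hunit,
      one_apply_eq_self]
  · rintro rfl
    rw [← mul_apply_eq_comp, Ring.mul_inverse_cancel _ hunit,
      one_apply_eq_self]

theorem isSolution_solution : IsSolution μ l y₀ g₀ (solution μ l y₀ g₀) :=
  isSolution_iff_eq_solution.mpr rfl

theorem solution_eq_smul_add_smul (l y₀ g₀ : ℝ) :
    solution μ l y₀ g₀ = y₀ • solution μ l 1 0 + g₀ • solution μ l 0 1 := by
  simp [solution]

theorem continuous_solution (y₀ g₀ : ℝ) : Continuous fun l => solution μ l y₀ g₀ :=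
  (continuous_inverse_one_add_smul (A := C(I, ℝ) →L[ℝ] C(I, ℝ))
    (isUnit_one_add_smul_volterra μ)).clm_apply continuous_const

theorem continuous_solution_uncurry (y₀ g₀ : ℝ) :
    Continuous fun q : ℝ × I => solution μ q.1 y₀ g₀ q.2 :=
  continuous_eval.comp ((continuous_solution y₀ g₀).prodMap continuous_id)

theorem IsSolution.apply_zero (h : IsSolution μ l y₀ g₀ y) : y 0 = y₀ := by
  simp [h 0, volterra_apply_zero]

theorem integral_mul_volterra_sub_integral_mul_volterra (u v : C(I, ℝ)) :
    ∫ x, v x * volterra μ u x ∂μ - ∫ x, u x * volterra μ v x ∂μ =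
      (∫ x : I, (x : ℝ) * v x ∂μ) * (∫ t, u t ∂μ) - (∫ x, v x ∂μ) * ∫ t : I, (t : ℝ) * u t ∂μ := by
  have hswap : ∫ x, u x * volterra μ v x ∂μ =
      ∫ x, v x * ∫ t : I, max (t - x : ℝ) 0 * u t ∂μ ∂μ := by
    simp only [volterra_apply, ← integral_const_mul]
    rw [integral_integral_swap]
    · simp only [mul_left_comm (v _), mul_left_comm (u _), mul_comm (u _)]
    · exact Continuous.integrable_of_hasCompactSupport (by fun_prop)
        (HasCompactSupport.of_compactSpace _)
  have hinner (x : I) : volterra μ u x - ∫ t : I, max (t - x : ℝ) 0 * u t ∂μ =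
      x * (∫ t, u t ∂μ) - ∫ t : I, (t : ℝ) * u t ∂μ := by
    rw [volterra_apply, ← integral_sub_of_continuous μ (by fun_prop) (by fun_prop),
      ← integral_const_mul, ← integral_sub_of_continuous μ (by fun_prop) (by fun_prop)]
    refine integral_congr_ae (.of_forall fun t => ?_)
    have : max (x - t : ℝ) 0 - max (t - x : ℝ) 0 = x - t := by
      rw [← neg_sub (x : ℝ) t]
      exact max_zero_sub_max_neg_zero_eq_self _
    linear_combination u t * this
  have hcont : Continuous fun x : I => ∫ t : I, max (t - x : ℝ) 0 * u t ∂μ :=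
    continuous_integral_of_continuous_uncurry μ (by fun_prop)
  rw [hswap, ← integral_sub_of_continuous μ (by fun_prop) (by fun_prop), ← integral_mul_const,
    ← integral_mul_const, ← integral_sub_of_continuous μ (by fun_prop) (by fun_prop)]
  refine integral_congr_ae (.of_forall fun x => ?_)
  linear_combination v x * hinner x

theorem IsSolution.lagrange_identity {u v : C(I, ℝ)} {u₀ u₀' v₀ v₀' : ℝ}
    (hu : IsSolution μ l u₀ u₀' u) (hv : IsSolution μ p v₀ v₀' v) :
    u 1 * (v₀' - p * ∫ x, v x ∂μ) - (u₀' - l * ∫ x, u x ∂μ) * v 1 =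
      u₀ * v₀' - u₀' * v₀ + (l - p) * ∫ x, u x * v x ∂μ := by
  have htest {l u₀ u₀' : ℝ} {u : C(I, ℝ)} (hu : IsSolution μ l u₀ u₀' u) (v : C(I, ℝ)) :
      ∫ x, u x * v x ∂μ + l * ∫ x, v x * volterra μ u x ∂μ =
        u₀ * (∫ x, v x ∂μ) + u₀' * ∫ x : I, (x : ℝ) * v x ∂μ := by
    simp only [← integral_const_mul]
    rw [← integral_add_of_continuous μ (by fun_prop) (by fun_prop),
      ← integral_add_of_continuous μ (by fun_prop) (by fun_prop)]
    refine integral_congr_ae (.of_forall fun x => ?_)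
    linear_combination v x * hu x
  have huv := htest hu v
  have hvu := htest hv u
  have hgreen := integral_mul_volterra_sub_integral_mul_volterra (μ := μ) u v
  have hu1 := hu 1
  have hv1 := hv 1
  rw [volterra_apply_one, Set.Icc.coe_one] at hu1 hv1
  simp only [mul_comm (v _) (u _)] at hvu
  rw [hu1, hv1]
  linear_combination p * huv - l * hvu - l * p * hgreen

section TransferMatrix

variable (μ)

/-- The value at `1` of the solution with initial data `(1, 0)`. -/
noncomputable def cosValue (l : ℝ) : ℝ := solution μ l 1 0 1

/-- The value at `1` of the solution with initial data `(0, 1)`; its zeros are the Dirichlet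
eigenvalues. -/
noncomputable def sinValue (l : ℝ) : ℝ := solution μ l 0 1 1

/-- The slope at `1` of the solution with initial data `(1, 0)`; its zeros are the Neumann
eigenvalues. -/
noncomputable def cosSlope (l : ℝ) : ℝ := -(l * ∫ t, solution μ l 1 0 t ∂μ)

/-- The slope at `1` of the solution with initial data `(0, 1)`. -/
noncomputable def sinSlope (l : ℝ) : ℝ := 1 - l * ∫ t, solution μ l 0 1 t ∂μ

/-- The matrix taking the value and slope at `0` of a solution to its value and slope at `1`. -/
noncomputable def transferMatrix (l : ℝ) : Matrix (Fin 2) (Fin 2) ℝ :=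
  !![cosValue μ l, sinValue μ l; cosSlope μ l, sinSlope μ l]

variable {μ}

theorem IsSolution.transferMatrix_mulVec (h : IsSolution μ l y₀ g₀ y) :
    (transferMatrix μ l).mulVec ![y₀, g₀] = ![y 1, g₀ - l * ∫ t, y t ∂μ] := by
  have hy := isSolution_iff_eq_solution.mp h
  rw [solution_eq_smul_add_smul] at hy
  have h_integral : ∫ t, y t ∂μ =
      y₀ * (∫ t, solution μ l 1 0 t ∂μ) + g₀ * ∫ t, solution μ l 0 1 t ∂μ := by
    rw [hy, ← integral_const_mul, ← integral_const_mul]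
    exact integral_add_of_continuous μ (by fun_prop) (by fun_prop)
  ext i
  fin_cases i
  · simp [transferMatrix, hy, cosValue, sinValue]
  · simp [transferMatrix, h_integral, cosSlope, sinSlope]
    ring

theorem det_transferMatrix (l : ℝ) : (transferMatrix μ l).det = 1 := by
  have h := IsSolution.lagrange_identity (isSolution_solution (μ := μ) (l := l) (y₀ := 1) (g₀ := 0))
    (isSolution_solution (μ := μ) (l := l) (y₀ := 0) (g₀ := 1))
  rw [transferMatrix, Matrix.det_fin_two_of, cosValue, sinValue, cosSlope, sinSlope]
  linear_combination h

theorem cosSlope_mul_cosValue (l : ℝ) (hp : cosSlope μ p = 0) :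
    cosSlope μ l * cosValue μ p =
      (p - l) * ∫ t, solution μ l 1 0 t * solution μ p 1 0 t ∂μ := by
  have h := IsSolution.lagrange_identity (isSolution_solution (μ := μ) (l := l) (y₀ := 1) (g₀ := 0))
    (isSolution_solution (μ := μ) (l := p) (y₀ := 1) (g₀ := 0))
  rw [cosSlope] at *
  rw [cosValue]
  linear_combination (solution μ l 1 0 1) * hp - h

theorem transferMatrix_zero : transferMatrix μ 0 = !![1, 1; 0, 1] := by
  simp [transferMatrix, cosValue, sinValue, cosSlope, sinSlope,
    isSolution_solution (μ := μ) (l := 0) 1]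

theorem continuous_integral_solution (y₀ g₀ : ℝ) :
    Continuous fun l => ∫ t, solution μ l y₀ g₀ t ∂μ :=
  continuous_integral_of_continuous_uncurry μ (continuous_solution_uncurry y₀ g₀)

@[fun_prop]
theorem continuous_cosValue : Continuous (cosValue μ) :=
  (continuous_eval_const 1).comp (continuous_solution 1 0)

@[fun_prop]
theorem continuous_sinValue : Continuous (sinValue μ) :=
  (continuous_eval_const 1).comp (continuous_solution 0 1)

@[fun_prop]
theorem continuous_cosSlope : Continuous (cosSlope μ) :=
  (continuous_id.mul (continuous_integral_solution 1 0)).neg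

theorem integral_sq_solution_pos (hμ : μ ≠ 0) (l : ℝ) :
    0 < ∫ t, solution μ l 1 0 t * solution μ l 1 0 t ∂μ := by
  set y := solution μ l 1 0 with hy
  refine (integral_nonneg fun t => mul_self_nonneg (y t)).lt_of_ne' fun hzero => ?_
  have hae : y =ᵐ[μ] 0 := by
    have := (integral_eq_zero_iff_of_nonneg (fun t => mul_self_nonneg (y t))
      (integrable_of_continuous μ (by fun_prop))).mp hzero
    filter_upwards [this] with t ht using mul_self_eq_zero.mp ht
  have hone (x : I) : y x = 1 := by
    have hvol : volterra μ y x = 0 := by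
      rw [volterra_apply]
      refine integral_eq_zero_of_ae ?_
      filter_upwards [hae] with t ht
      simp [ht]
    have := isSolution_solution (μ := μ) (l := l) (y₀ := 1) (g₀ := 0) x
    rw [← hy] at this
    simpa [hvol] using this
  have hfalse : ∀ᵐ _ : I ∂μ, False := by
    filter_upwards [hae] with t ht
    exact one_ne_zero ((hone t).symm.trans ht)
  simp [hμ] at hfalse

end TransferMatrix

end KreinString

/-! ### Self-similar strings -/

/-- Parameters of a Cantor-type similarity: `κ` cells of length `a`, separated by gaps of length
`b`, fill the unit interval. -/
structure CantorParams (κ : ℕ) (a b : ℝ) : Prop where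
  two_le : 2 ≤ κ
  a_pos : 0 < a
  b_pos : 0 < b
  length_eq : κ * a + (κ - 1) * b = 1

namespace CantorParams

variable {κ : ℕ} {a b : ℝ} (h : CantorParams κ a b)

include h

theorem two_le_cast : (2 : ℝ) ≤ κ := by exact_mod_cast h.two_le

theorem cast_pos : (0 : ℝ) < κ := by linarith [h.two_le_cast]

theorem a_lt_one : a < 1 := by nlinarith [h.two_le_cast, h.a_pos, h.b_pos, h.length_eq]

theorem cast_lt_ratio : (κ : ℝ) < κ / a :=
  (lt_div_iff₀ h.a_pos).mpr (mul_lt_of_lt_one_right h.cast_pos h.a_lt_one)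

theorem one_lt_ratio : 1 < κ / a := by linarith [h.two_le_cast, h.cast_lt_ratio]

theorem ratio_pos : 0 < κ / a := one_pos.trans h.one_lt_ratio

theorem cell_right_le_one {k : ℕ} (hk : k < κ) : k * (a + b) + a ≤ 1 := by
  have hk' : (k : ℝ) ≤ κ - 1 := le_sub_iff_add_le.mpr (by exact_mod_cast hk)
  nlinarith [h.length_eq, h.a_pos, h.b_pos]

theorem ratio_rpow_log_div_log : (κ / a : ℝ) ^ (log κ / log (κ / a)) = κ :=
  rpow_logb (zero_lt_one.trans h.one_lt_ratio) h.one_lt_ratio.ne'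
    (zero_lt_two.trans_le h.two_le_cast)

theorem log_div_log_mem_Icc : log κ / log (κ / a) ∈ Set.Icc (0 : ℝ) 1 := by
  have hκ : (1 : ℝ) ≤ κ := one_le_two.trans h.two_le_cast
  refine ⟨logb_nonneg h.one_lt_ratio hκ, ?_⟩
  calc logb (κ / a) κ ≤ logb (κ / a) (κ / a) :=
        logb_le_logb_of_le h.one_lt_ratio (zero_lt_one.trans_le hκ) h.cast_lt_ratio.le
    _ = 1 := logb_self_eq_one h.one_lt_ratio

end CantorParams

theorem cantorParams_of_lt {κ : ℕ} {a b : ℝ} (hκ : 2 ≤ κ) (ha : 0 < a) (ha' : a < 1 / κ)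
    (hb : b = (1 - κ * a) / (κ - 1)) : CantorParams κ a b := by
  have hκ' : (2 : ℝ) ≤ κ := by exact_mod_cast hκ
  have hlt : 0 < 1 - κ * a := by
    rw [lt_div_iff₀ (by linarith)] at ha'
    linarith
  refine ⟨hκ, ha, hb ▸ div_pos hlt (by linarith), ?_⟩
  rw [hb, mul_div_cancel₀ _ (by linarith)]
  ring

namespace KreinString

open unitInterval Polynomial.Chebyshev

/-- The similarity of `I` onto its `k`-th cell `[k (a + b), k (a + b) + a]`. It is clamped to `I`,
which has no effect when `k < κ`. -/
noncomputable def cell (a b : ℝ) (k : ℕ) : C(I, I) :=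
  ⟨fun x => Set.projIcc 0 1 zero_le_one (k * (a + b) + a * x), by fun_prop⟩

/-- `μ` is the average of its images under the `κ` cell maps, tested on continuous functions. -/
def IsSelfSimilar (μ : Measure I) (κ : ℕ) (a b : ℝ) : Prop :=
  ∀ f : C(I, ℝ), ∫ x, f x ∂μ = (κ : ℝ)⁻¹ * ∑ k ∈ Finset.range κ, ∫ x, f (cell a b k x) ∂μ

variable {μ : Measure I} [IsFiniteMeasure μ] {κ : ℕ} {a b : ℝ}

theorem coe_cell (hp : CantorParams κ a b) {k : ℕ} (hk : k < κ) (x : I) :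
    (cell a b k x : ℝ) = k * (a + b) + a * x := by
  have ha := hp.a_pos
  have hb := hp.b_pos
  refine congrArg Subtype.val (Set.projIcc_of_mem zero_le_one ⟨?_, ?_⟩)
  · have := x.2.1
    positivity
  · nlinarith [hp.cell_right_le_one hk, x.2.2]

theorem cell_zero_zero (hp : CantorParams κ a b) : cell a b 0 0 = 0 :=
  Subtype.ext (by simp [coe_cell hp (zero_lt_two.trans_le hp.two_le)])

theorem cell_last_one (hp : CantorParams κ a b) : cell a b (κ - 1) 1 = 1 := by
  have h1 : 1 ≤ κ := one_le_two.trans hp.two_le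
  refine Subtype.ext ?_
  rw [coe_cell hp (by lia), Nat.cast_sub h1, Set.Icc.coe_one, Nat.cast_one]
  linear_combination hp.length_eq

theorem volterra_apply_sub_of_kernel_eq (hμ : IsSelfSimilar μ κ a b) {k : ℕ} (hk : k < κ)
    (y : C(I, ℝ)) {x z : I} {c : ℝ} {h : I → ℝ}
    (hlt : ∀ i < k, ∀ t, max (z - cell a b i t : ℝ) 0 - max (x - cell a b i t : ℝ) 0 = c)
    (heq : ∀ t, max (z - cell a b k t : ℝ) 0 - max (x - cell a b k t : ℝ) 0 = h t)
    (hgt : ∀ i, k < i → i < κ → ∀ t,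
      max (z - cell a b i t : ℝ) 0 - max (x - cell a b i t : ℝ) 0 = 0) :
    volterra μ y z - volterra μ y x = (κ : ℝ)⁻¹ *
      (c * (∑ i ∈ Finset.range k, ∫ t, y (cell a b i t) ∂μ) +
        ∫ t, h t * y (cell a b k t) ∂μ) := by
  rw [volterra_apply, volterra_apply, ← integral_sub_of_continuous μ (by fun_prop) (by fun_prop)]
  simp only [← sub_mul]
  refine (hμ ⟨fun t : I => (max (z - t : ℝ) 0 - max (x - t : ℝ) 0) * y t, by fun_prop⟩).trans ?_
  simp only [ContinuousMap.coe_mk]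
  rw [← Finset.sum_subset (Finset.range_subset_range.mpr (Nat.succ_le_of_lt hk)),
    Finset.sum_range_succ, Finset.mul_sum]
  · simp only [heq]
    congr 2
    refine Finset.sum_congr rfl fun i hi => ?_
    simp only [hlt i (Finset.mem_range.mp hi), integral_const_mul]
  · intro i hiκ hi
    rw [Finset.mem_range, not_lt] at hi
    simp [hgt i hi (Finset.mem_range.mp hiκ)]

theorem cell_le_cell_of_lt (hp : CantorParams κ a b) {i j : ℕ} (hij : i < j) (hj : j < κ)
    (s t : I) : cell a b i s ≤ cell a b j t := by
  have hij' : (i : ℝ) + 1 ≤ j := by exact_mod_cast hij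
  rw [← Subtype.coe_le_coe, coe_cell hp (hij.trans hj), coe_cell hp hj]
  nlinarith [hp.a_pos, hp.b_pos, s.2.2, t.2.1]

theorem strictMono_cell (hp : CantorParams κ a b) {k : ℕ} (hk : k < κ) :
    StrictMono (cell a b k) := fun s t hst => by
  rw [← Subtype.coe_lt_coe, coe_cell hp hk, coe_cell hp hk]
  gcongr
  exact hp.a_pos

theorem max_sub_sub_max_sub_of_le {s x z : ℝ} (hx : s ≤ x) (hz : s ≤ z) :
    max (z - s) 0 - max (x - s) 0 = z - x := by
  rw [max_eq_left (sub_nonneg.mpr hx), max_eq_left (sub_nonneg.mpr hz), sub_sub_sub_cancel_right]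

theorem max_sub_sub_max_sub_of_ge {s x z : ℝ} (hx : x ≤ s) (hz : z ≤ s) :
    max (z - s) 0 - max (x - s) 0 = 0 := by
  rw [max_eq_right (sub_nonpos.mpr hx), max_eq_right (sub_nonpos.mpr hz), sub_zero]

theorem volterra_cell_sub (hp : CantorParams κ a b) (hμ : IsSelfSimilar μ κ a b) {k : ℕ}
    (hk : k < κ) (y : C(I, ℝ)) (x : I) :
    volterra μ y (cell a b k x) - volterra μ y (cell a b k 0) =
      a / κ * (x * (∑ i ∈ Finset.range k, ∫ t, y (cell a b i t) ∂μ) +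
        volterra μ (y.comp (cell a b k)) x) := by
  rw [volterra_apply_sub_of_kernel_eq hμ hk y (c := a * x) (h := fun t => a * max (x - t : ℝ) 0),
    volterra_apply]
  · simp only [mul_assoc, integral_const_mul, ContinuousMap.comp_apply]
    ring
  · intro i hi t
    rw [max_sub_sub_max_sub_of_le (cell_le_cell_of_lt hp hi hk t 0)
      (cell_le_cell_of_lt hp hi hk t x), coe_cell hp hk, coe_cell hp hk, Set.Icc.coe_zero]
    ring
  · intro t
    have hsub : (cell a b k x - cell a b k t : ℝ) = a * (x - t) := by
      rw [coe_cell hp hk, coe_cell hp hk]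
      ring
    have hleft : (cell a b k 0 : ℝ) ≤ cell a b k t := (strictMono_cell hp hk).monotone t.2.1
    rw [max_eq_right (sub_nonpos.mpr hleft), sub_zero, hsub, mul_max_of_nonneg _ _ hp.a_pos.le,
      mul_zero]
  · exact fun i hi hiκ t => max_sub_sub_max_sub_of_ge (cell_le_cell_of_lt hp hi hiκ 0 t)
      (cell_le_cell_of_lt hp hi hiκ x t)

theorem coe_cell_succ_zero_sub (hp : CantorParams κ a b) {k : ℕ} (hk : k + 1 < κ) :
    (cell a b (k + 1) 0 - cell a b k 1 : ℝ) = b := by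
  rw [coe_cell hp hk, coe_cell hp (k.lt_succ_self.trans hk), Set.Icc.coe_zero, Set.Icc.coe_one]
  push_cast
  ring

theorem volterra_gap_sub (hp : CantorParams κ a b) (hμ : IsSelfSimilar μ κ a b) {k : ℕ}
    (hk : k + 1 < κ) (y : C(I, ℝ)) :
    volterra μ y (cell a b (k + 1) 0) - volterra μ y (cell a b k 1) =
      b / κ * ∑ i ∈ Finset.range (k + 1), ∫ t, y (cell a b i t) ∂μ := by
  have hk' : k < κ := k.lt_succ_self.trans hk
  rw [volterra_apply_sub_of_kernel_eq hμ hk' y (c := b) (h := fun _ => b)]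
  · rw [integral_const_mul, Finset.sum_range_succ]
    ring
  · intro i hi t
    rw [max_sub_sub_max_sub_of_le (cell_le_cell_of_lt hp hi hk' t 1)
      (cell_le_cell_of_lt hp (by lia) hk t 0), coe_cell_succ_zero_sub hp hk]
  · intro t
    rw [max_sub_sub_max_sub_of_le ((strictMono_cell hp hk').monotone t.2.2)
      (cell_le_cell_of_lt hp (by lia) hk t 0), coe_cell_succ_zero_sub hp hk]
  · intro i hi hiκ t
    refine max_sub_sub_max_sub_of_ge (cell_le_cell_of_lt hp hi hiκ 1 t) ?_
    rcases (Nat.succ_le_of_lt hi).eq_or_lt with rfl | hlt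
    · exact (strictMono_cell hp hk).monotone t.2.1
    · exact cell_le_cell_of_lt hp hlt hiκ 0 t

variable {l y₀ g₀ : ℝ} {y : C(I, ℝ)}

theorem IsSolution.comp_cell (hp : CantorParams κ a b) (hμ : IsSelfSimilar μ κ a b)
    (hy : IsSolution μ (κ / a * l) y₀ g₀ y) {k : ℕ} (hk : k < κ) :
    IsSolution μ l (y (cell a b k 0))
      (a * (g₀ - l / a * ∑ i ∈ Finset.range k, ∫ t, y (cell a b i t) ∂μ))
      (y.comp (cell a b k)) := fun x => by
  have ha := hp.a_pos.ne'
  have hκ := hp.cast_pos.ne'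
  have hvol := volterra_cell_sub hp hμ hk y x
  have hx := coe_cell hp hk x
  have hzero := coe_cell hp hk 0
  rw [Set.Icc.coe_zero] at hzero
  rw [ContinuousMap.comp_apply, hy (cell a b k x), hy (cell a b k 0), hx, hzero,
    eq_add_of_sub_eq hvol]
  field_simp
  ring

theorem IsSolution.apply_cell_succ_zero (hp : CantorParams κ a b) (hμ : IsSelfSimilar μ κ a b)
    (hy : IsSolution μ (κ / a * l) y₀ g₀ y) {k : ℕ} (hk : k + 1 < κ) :
    y (cell a b (k + 1) 0) = y (cell a b k 1) +
      b * (g₀ - l / a * ∑ i ∈ Finset.range (k + 1), ∫ t, y (cell a b i t) ∂μ) := by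
  have ha := hp.a_pos.ne'
  have hκ := hp.cast_pos.ne'
  have hvol := volterra_gap_sub hp hμ hk y
  rw [hy (cell a b (k + 1) 0), hy (cell a b k 1), eq_add_of_sub_eq hvol,
    eq_add_of_sub_eq (coe_cell_succ_zero_sub hp hk)]
  field_simp
  ring

/-- The transfer matrix of one cell at the parameter `κ / a * l`: by scaling it is the transfer
matrix of the whole string at `l`, with slopes divided by `a`. -/
noncomputable def cellMatrix (μ : Measure I) [IsFiniteMeasure μ] (a l : ℝ) :
    Matrix (Fin 2) (Fin 2) ℝ :=
  !![cosValue μ l, a * sinValue μ l; cosSlope μ l / a, sinSlope μ l]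

/-- The transfer matrix of a massless gap of length `b`. -/
def gapMatrix (b : ℝ) : Matrix (Fin 2) (Fin 2) ℝ := !![1, b; 0, 1]

theorem IsSolution.cellMatrix_mulVec (hp : CantorParams κ a b) (hμ : IsSelfSimilar μ κ a b)
    (hy : IsSolution μ (κ / a * l) y₀ g₀ y) {k : ℕ} (hk : k < κ) :
    (cellMatrix μ a l).mulVec
        ![y (cell a b k 0), g₀ - l / a * ∑ i ∈ Finset.range k, ∫ t, y (cell a b i t) ∂μ] =
      ![y (cell a b k 1), g₀ - l / a * ∑ i ∈ Finset.range (k + 1), ∫ t, y (cell a b i t) ∂μ] := by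
  have ha := hp.a_pos.ne'
  have htransfer := (hy.comp_cell hp hμ hk).transferMatrix_mulVec
  have hvalue := congrFun htransfer 0
  have hslope := congrFun htransfer 1
  simp only [transferMatrix, Matrix.mulVec, Matrix.vec2_dotProduct, Matrix.of_apply,
    Matrix.cons_val, ContinuousMap.comp_apply] at hvalue hslope
  ext i
  fin_cases i
  · simp only [cellMatrix, Matrix.mulVec, Matrix.vec2_dotProduct, Matrix.of_apply,
      Matrix.cons_val, Fin.zero_eta]
    linear_combination hvalue
  · simp only [cellMatrix, Matrix.mulVec, Matrix.vec2_dotProduct, Matrix.of_apply,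
      Matrix.cons_val, Fin.mk_one, Finset.sum_range_succ]
    field_simp at hslope ⊢
    linear_combination hslope

theorem IsSolution.gapMatrix_mul_cellMatrix_pow_mulVec (hp : CantorParams κ a b)
    (hμ : IsSelfSimilar μ κ a b) (hy : IsSolution μ (κ / a * l) y₀ g₀ y) {k : ℕ} (hk : k < κ) :
    ((gapMatrix b * cellMatrix μ a l) ^ k).mulVec ![y₀, g₀] =
      ![y (cell a b k 0), g₀ - l / a * ∑ i ∈ Finset.range k, ∫ t, y (cell a b i t) ∂μ] := by
  induction k with
  | zero => simp [cell_zero_zero hp, hy.apply_zero]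
  | succ k ih =>
    have hk' : k < κ := k.lt_succ_self.trans hk
    rw [_root_.pow_succ', ← Matrix.mulVec_mulVec, ih hk', ← Matrix.mulVec_mulVec,
      hy.cellMatrix_mulVec hp hμ hk', hy.apply_cell_succ_zero hp hμ hk]
    ext i
    fin_cases i <;> simp [gapMatrix, Matrix.mulVec]

theorem gapMatrix_mul_transferMatrix (hp : CantorParams κ a b) (hμ : IsSelfSimilar μ κ a b)
    (l : ℝ) :
    gapMatrix b * transferMatrix μ (κ / a * l) = (gapMatrix b * cellMatrix μ a l) ^ κ := by
  have hκ : κ - 1 + 1 = κ := Nat.sub_add_cancel (one_le_two.trans hp.two_le)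
  refine Matrix.ext_of_mulVec_single fun i => ?_
  obtain ⟨y₀, g₀, hs⟩ : ∃ y₀ g₀ : ℝ, Pi.single i 1 = ![y₀, g₀] :=
    ⟨_, _, (FinVec.etaExpand_eq _).symm⟩
  have hy : IsSolution μ (κ / a * l) y₀ g₀ (solution μ (κ / a * l) y₀ g₀) := isSolution_solution
  set y := solution μ (κ / a * l) y₀ g₀
  have hend : κ / a * l * ∫ t, y t ∂μ =
      l / a * ∑ i ∈ Finset.range κ, ∫ t, y (cell a b i t) ∂μ := by
    rw [hμ y]
    field [hp.a_pos.ne', hp.cast_pos.ne']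
  have hlast := hy.cellMatrix_mulVec hp hμ (k := κ - 1) (by lia)
  rw [cell_last_one hp, hκ] at hlast
  rw [hs]
  calc (gapMatrix b * transferMatrix μ (κ / a * l)).mulVec ![y₀, g₀]
      = (gapMatrix b).mulVec ![y 1, g₀ - κ / a * l * ∫ t, y t ∂μ] := by
        rw [← Matrix.mulVec_mulVec, hy.transferMatrix_mulVec]
    _ = (gapMatrix b * cellMatrix μ a l).mulVec
          (((gapMatrix b * cellMatrix μ a l) ^ (κ - 1)).mulVec ![y₀, g₀]) := by
        rw [hend, ← hlast, hy.gapMatrix_mul_cellMatrix_pow_mulVec hp hμ (by lia),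
          Matrix.mulVec_mulVec]
    _ = ((gapMatrix b * cellMatrix μ a l) ^ κ).mulVec ![y₀, g₀] := by
        rw [Matrix.mulVec_mulVec, ← _root_.pow_succ', hκ]

end KreinString

/-! ### Renormalization of the transfer matrix -/

namespace KreinString

open unitInterval Polynomial.Chebyshev

variable {μ : Measure I} [IsFiniteMeasure μ] {κ : ℕ} {a b : ℝ}

/-- Half the trace of the transfer matrix of a cell followed by a gap. -/
noncomputable def halfTrace (μ : Measure I) [IsFiniteMeasure μ] (a b l : ℝ) : ℝ :=
  (cosValue μ l + sinSlope μ l + b / a * cosSlope μ l) / 2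

theorem det_gapMatrix (b : ℝ) : (gapMatrix b).det = 1 := by simp [gapMatrix]

theorem det_cellMatrix (ha : a ≠ 0) (l : ℝ) : (cellMatrix μ a l).det = 1 := by
  rw [← det_transferMatrix (μ := μ) l, cellMatrix, transferMatrix, Matrix.det_fin_two_of,
    Matrix.det_fin_two_of]
  field

theorem transferMatrix_ratio_mul (hp : CantorParams κ a b) (hμ : IsSelfSimilar μ κ a b) (l : ℝ) :
    transferMatrix μ (κ / a * l) =
      (U ℝ (κ - 1)).eval (halfTrace μ a b l) • cellMatrix μ a l -
        (U ℝ (κ - 2)).eval (halfTrace μ a b l) • gapMatrix (-b) := by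
  have hinv : gapMatrix (-b) * gapMatrix b = 1 := by
    simp [gapMatrix, Matrix.one_fin_two]
  have htrace : (gapMatrix b * cellMatrix μ a l).trace = 2 * halfTrace μ a b l := by
    simp only [gapMatrix, cellMatrix, halfTrace, Matrix.mul_fin_two, Matrix.trace_fin_two_of]
    ring
  have hdet : (gapMatrix b * cellMatrix μ a l).det = 1 := by
    rw [Matrix.det_mul, det_gapMatrix, det_cellMatrix hp.a_pos.ne', one_mul]
  have h := congrArg (gapMatrix (-b) * ·) (gapMatrix_mul_transferMatrix hp hμ l)
  simp only [matrix_fin_two_pow_eq_chebyshev hdet htrace, Matrix.mul_sub, Matrix.mul_smul] at h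
  rwa [← Matrix.mul_assoc, ← Matrix.mul_assoc, hinv, Matrix.one_mul, Matrix.one_mul,
    Matrix.mul_one] at h

section Scaling

variable (hp : CantorParams κ a b) (hμ : IsSelfSimilar μ κ a b) (l : ℝ)

include hp hμ

theorem cosValue_ratio_mul : cosValue μ (κ / a * l) =
    (U ℝ (κ - 1)).eval (halfTrace μ a b l) * cosValue μ l -
      (U ℝ (κ - 2)).eval (halfTrace μ a b l) := by
  simpa [transferMatrix, cellMatrix, gapMatrix] using
    congrFun₂ (transferMatrix_ratio_mul hp hμ l) 0 0

theorem sinValue_ratio_mul : sinValue μ (κ / a * l) =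
    (U ℝ (κ - 1)).eval (halfTrace μ a b l) * (a * sinValue μ l) +
      b * (U ℝ (κ - 2)).eval (halfTrace μ a b l) := by
  simpa [transferMatrix, cellMatrix, gapMatrix, mul_comm b] using
    congrFun₂ (transferMatrix_ratio_mul hp hμ l) 0 1

theorem cosSlope_ratio_mul : cosSlope μ (κ / a * l) =
    (U ℝ (κ - 1)).eval (halfTrace μ a b l) * (cosSlope μ l / a) := by
  simpa [transferMatrix, cellMatrix, gapMatrix] using
    congrFun₂ (transferMatrix_ratio_mul hp hμ l) 1 0

theorem sinSlope_ratio_mul : sinSlope μ (κ / a * l) =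
    (U ℝ (κ - 1)).eval (halfTrace μ a b l) * sinSlope μ l -
      (U ℝ (κ - 2)).eval (halfTrace μ a b l) := by
  simpa [transferMatrix, cellMatrix, gapMatrix] using
    congrFun₂ (transferMatrix_ratio_mul hp hμ l) 1 1

end Scaling

theorem cosValue_zero : cosValue μ 0 = 1 := congrFun₂ (transferMatrix_zero (μ := μ)) 0 0

theorem sinValue_zero : sinValue μ 0 = 1 := congrFun₂ (transferMatrix_zero (μ := μ)) 0 1

theorem cosSlope_zero : cosSlope μ 0 = 0 := congrFun₂ (transferMatrix_zero (μ := μ)) 1 0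

theorem sinSlope_zero : sinSlope μ 0 = 1 := congrFun₂ (transferMatrix_zero (μ := μ)) 1 1

@[fun_prop]
theorem continuous_sinSlope : Continuous (sinSlope μ) :=
  continuous_const.sub (continuous_id.mul (continuous_integral_solution 0 1))

@[fun_prop]
theorem continuous_halfTrace : Continuous (halfTrace μ a b) := by
  unfold halfTrace
  fun_prop

theorem halfTrace_zero : halfTrace μ a b 0 = 1 := by
  rw [halfTrace, cosValue_zero, sinSlope_zero, cosSlope_zero]
  ring

-- The string is symmetric under `x ↦ 1 - x`. Instead of reflecting solutions, note that
-- `cosValue - sinSlope` vanishes at `0` and is multiplied by a factor near `κ < κ / a` when `l` is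
-- multiplied by `κ / a`.
theorem sinSlope_eq_cosValue (hp : CantorParams κ a b) (hμ : IsSelfSimilar μ κ a b) (l : ℝ) :
    sinSlope μ l = cosValue μ l := by
  have hfactor (x : ℝ) : sinSlope μ x - cosValue μ x =
      x * (volterra μ (solution μ x 1 0) 1 - ∫ t, solution μ x 0 1 t ∂μ) := by
    rw [sinSlope, cosValue, isSolution_solution (l := x) (y₀ := 1) (g₀ := 0) 1]
    ring
  have hcont : Continuous fun x =>
      volterra μ (solution μ x 1 0) 1 - ∫ t, solution μ x 0 1 t ∂μ :=
    ((continuous_eval_const 1).comp ((volterra μ).continuous.comp (continuous_solution 1 0))).sub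
      (continuous_integral_solution 0 1)
  have hU : Continuous fun x => (U ℝ (κ - 1)).eval (halfTrace μ a b x) := by fun_prop
  have hU0 : |(U ℝ (κ - 1)).eval (halfTrace μ a b 0)| < κ / a := by
    simpa [halfTrace_zero, U_eval_one] using hp.cast_lt_ratio
  refine sub_eq_zero.mp (eq_zero_of_map_mul_eq_mul (d := fun x => sinSlope μ x - cosValue μ x)
    hp.one_lt_ratio hfactor hcont.continuousAt hU.continuousAt hU0 (fun x => ?_) l)
  rw [sinSlope_ratio_mul hp hμ, cosValue_ratio_mul hp hμ]
  ring

section SymmetricScaling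

variable (hp : CantorParams κ a b) (hμ : IsSelfSimilar μ κ a b)

include hp hμ

theorem halfTrace_eq (l : ℝ) : halfTrace μ a b l = cosValue μ l + b / (2 * a) * cosSlope μ l := by
  have ha := hp.a_pos.ne'
  rw [halfTrace, sinSlope_eq_cosValue hp hμ]
  field

theorem cosValue_sq (l : ℝ) : cosValue μ l ^ 2 = 1 + sinValue μ l * cosSlope μ l := by
  have hdet := det_transferMatrix (μ := μ) l
  rw [transferMatrix, Matrix.det_fin_two_of, sinSlope_eq_cosValue hp hμ] at hdet
  linear_combination hdet

theorem cosValue_ratio_mul_eq_T (l : ℝ) : cosValue μ (κ / a * l) =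
    (T ℝ κ).eval (halfTrace μ a b l) -
      b / (2 * a) * ((U ℝ (κ - 1)).eval (halfTrace μ a b l) * cosSlope μ l) := by
  have hT := congrArg (Polynomial.eval (halfTrace μ a b l)) (T_eq_X_mul_U_sub_U ℝ (κ - 2))
  simp only [sub_add_cancel, show (κ : ℤ) - 2 + 1 = κ - 1 by ring, Polynomial.eval_sub,
    Polynomial.eval_mul, Polynomial.eval_X] at hT
  rw [hT, cosValue_ratio_mul hp hμ]
  linear_combination
    -(U ℝ (κ - 1)).eval (halfTrace μ a b l) * halfTrace_eq hp hμ l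

theorem halfTrace_ratio_mul (l : ℝ) : halfTrace μ a b (κ / a * l) =
    (T ℝ κ).eval (halfTrace μ a b l) + b / (2 * a) * (1 / a - 1) *
      ((U ℝ (κ - 1)).eval (halfTrace μ a b l) * cosSlope μ l) := by
  rw [halfTrace_eq hp hμ, cosValue_ratio_mul_eq_T hp hμ, cosSlope_ratio_mul hp hμ]
  ring

end SymmetricScaling

end KreinString

/-! ### Renormalization of Neumann points -/

theorem exists_mem_Ioo_eq_zero_of_eq_neg {f : ℝ → ℝ} (hf : Continuous f) {u v : ℝ} (huv : u ≤ v)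
    (hu : f u ≠ 0) (hv : f v = -f u) : ∃ z ∈ Set.Ioo u v, f z = 0 := by
  have hzero : (0 : ℝ) ∈ Set.uIcc (f u) (f v) := by
    rw [hv, Set.mem_uIcc]
    rcases le_total 0 (f u) with h | h
    · exact Or.inr ⟨neg_nonpos.mpr h, h⟩
    · exact Or.inl ⟨h, neg_nonneg.mpr h⟩
  obtain ⟨z, hz, hfz⟩ := intermediate_value_uIcc hf.continuousOn hzero
  rw [Set.uIcc_of_le huv] at hz
  refine ⟨z, ⟨hz.1.lt_of_ne ?_, hz.2.lt_of_ne ?_⟩, hfz⟩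
  · rintro rfl
    exact hu hfz
  · rintro rfl
    exact hu (neg_eq_zero.mp (hv ▸ hfz))

namespace KreinString

open unitInterval Polynomial.Chebyshev

variable {μ : Measure I} [IsFiniteMeasure μ] {κ : ℕ} {a b : ℝ} (hp : CantorParams κ a b)
  (hμ : IsSelfSimilar μ κ a b)

include hp hμ

section NeumannPoint

variable {l : ℝ}

theorem cosSlope_ratio_mul_eq_zero
    (h : (U ℝ (κ - 1)).eval (halfTrace μ a b l) * cosSlope μ l = 0) :
    cosSlope μ (κ / a * l) = 0 := by
  rw [cosSlope_ratio_mul hp hμ, ← mul_div_assoc, h, zero_div]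

theorem cosValue_ratio_mul_of_mul_eq_zero
    (h : (U ℝ (κ - 1)).eval (halfTrace μ a b l) * cosSlope μ l = 0) :
    cosValue μ (κ / a * l) = (T ℝ κ).eval (halfTrace μ a b l) := by
  rw [cosValue_ratio_mul_eq_T hp hμ, h, mul_zero, sub_zero]

theorem halfTrace_of_cosSlope_eq_zero (h : cosSlope μ l = 0) :
    halfTrace μ a b l = cosValue μ l := by
  rw [halfTrace_eq hp hμ, h, mul_zero, add_zero]

theorem cosValue_sq_of_cosSlope_eq_zero (h : cosSlope μ l = 0) : cosValue μ l ^ 2 = 1 := by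
  rw [cosValue_sq hp hμ, h, mul_zero, add_zero]

theorem cosValue_ne_zero_of_cosSlope_eq_zero (h : cosSlope μ l = 0) : cosValue μ l ≠ 0 := by
  intro hzero
  simpa [hzero] using cosValue_sq_of_cosSlope_eq_zero hp hμ h

theorem cosSlope_ratio_mul_of_cosSlope_eq_zero (h : cosSlope μ l = 0) :
    cosSlope μ (κ / a * l) = 0 :=
  cosSlope_ratio_mul_eq_zero hp hμ (by rw [h, mul_zero])

theorem cosValue_ratio_mul_of_cosSlope_eq_zero (h : cosSlope μ l = 0) :
    cosValue μ (κ / a * l) = cosValue μ l ^ κ := by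
  rw [cosValue_ratio_mul_of_mul_eq_zero hp hμ (by rw [h, mul_zero]),
    halfTrace_of_cosSlope_eq_zero hp hμ h]
  simpa using
    chebyshev_T_eval_mul_of_sq_eq_one (cosValue_sq_of_cosSlope_eq_zero hp hμ h) 1 κ

theorem sinValue_ratio_mul_of_U_eq_zero (h : (U ℝ (κ - 1)).eval (halfTrace μ a b l) = 0) :
    sinValue μ (κ / a * l) = -b * cosValue μ (κ / a * l) := by
  rw [sinValue_ratio_mul hp hμ, cosValue_ratio_mul hp hμ, h]
  ring

theorem sinValue_ratio_mul_of_cosSlope_eq_zero (h : cosSlope μ l = 0)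
    (hsin : sinValue μ l = -b * cosValue μ l) :
    sinValue μ (κ / a * l) = b * (κ - 1 - κ * a) * cosValue μ (κ / a * l) := by
  have hU := mul_chebyshev_U_eval_mul_of_sq_eq_one (cosValue_sq_of_cosSlope_eq_zero hp hμ h) 1 κ
  rw [mul_one, U_eval_one] at hU
  push_cast at hU
  have hcos := cosValue_ratio_mul hp hμ l
  rw [cosValue_ratio_mul_of_cosSlope_eq_zero hp hμ h] at hcos ⊢
  rw [halfTrace_of_cosSlope_eq_zero hp hμ h] at hcos
  rw [sinValue_ratio_mul hp hμ, halfTrace_of_cosSlope_eq_zero hp hμ h, hsin]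
  linear_combination (b - a * b) * hU + b * hcos

end NeumannPoint

omit hp hμ in
variable (μ) in
/-- Two nonnegative Neumann points at which the solution with initial data `(1, 0)` takes opposite
values at `1`. -/
structure NeumannPair (u v : ℝ) : Prop where
  nonneg : 0 ≤ u
  le : u ≤ v
  cosSlope_left : cosSlope μ u = 0
  cosSlope_right : cosSlope μ v = 0
  cosValue_right : cosValue μ v = -cosValue μ u

variable {u v w : ℝ}

theorem cosSlope_ratio_mul_of_halfTrace_eq {s : ℝ} (hs : s ^ 2 = 1) {j : ℕ} (hj : j ≤ κ) {q : ℝ}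
    (hq : halfTrace μ a b q = s * cos (j * π / κ))
    (hend : j = 0 ∨ j = κ → cosSlope μ q = 0) :
    cosSlope μ (κ / a * q) = 0 ∧ cosValue μ (κ / a * q) = s ^ κ * (-1) ^ j := by
  have hκ : κ ≠ 0 := (zero_lt_two.trans_le hp.two_le).ne'
  have hUC : (U ℝ (κ - 1)).eval (halfTrace μ a b q) * cosSlope μ q = 0 := by
    by_cases hj' : j = 0 ∨ j = κ
    · rw [hend hj', mul_zero]
    · rw [hq, chebyshev_U_eval_mul_cos_eq_zero hs (by lia) (by lia), zero_mul]
  refine ⟨cosSlope_ratio_mul_eq_zero hp hμ hUC, ?_⟩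
  rw [cosValue_ratio_mul_of_mul_eq_zero hp hμ hUC, hq, chebyshev_T_eval_mul_of_sq_eq_one hs,
    chebyshev_T_eval_cos_natCast_mul_pi_div hκ]

theorem NeumannPair.split (h : NeumannPair μ u v) : ∃ q : ℕ → ℝ, Monotone q ∧ q 0 = u ∧ q κ = v ∧
    (∀ i < κ, NeumannPair μ (κ / a * q i) (κ / a * q (i + 1))) ∧
    ∀ i, 0 < i → i < κ → sinValue μ (κ / a * q i) = -b * cosValue μ (κ / a * q i) := by
  have hκ : 0 < κ := zero_lt_two.trans_le hp.two_le
  have hr := hp.ratio_pos.le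
  have hs := cosValue_sq_of_cosSlope_eq_zero hp hμ h.cosSlope_left
  set s := cosValue μ u with hs_def
  obtain ⟨q, hmono, hq0, hqκ, hq⟩ := exists_monotone_chain_of_antitoneOn
    (f := fun x => s * halfTrace μ a b x) (by fun_prop) hκ
    (antitoneOn_cos_natCast_mul_pi_div hκ.ne') h.le
    (by simp [halfTrace_of_cosSlope_eq_zero hp hμ h.cosSlope_left, ← hs_def, ← sq, hs])
    (by simp [halfTrace_of_cosSlope_eq_zero hp hμ h.cosSlope_right, h.cosValue_right, ← hs_def,
      ← sq, hs, mul_div_cancel_left₀ _ hp.cast_pos.ne'])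
  have htrace (i : ℕ) (hi : i ≤ κ) : halfTrace μ a b (q i) = s * cos (i * π / κ) := by
    rw [← hq i hi, ← mul_assoc, ← sq, hs, one_mul]
  have hpoint (i : ℕ) (hi : i ≤ κ) :
      cosSlope μ (κ / a * q i) = 0 ∧ cosValue μ (κ / a * q i) = s ^ κ * (-1) ^ i := by
    refine cosSlope_ratio_mul_of_halfTrace_eq hp hμ hs hi (htrace i hi) ?_
    rintro (rfl | rfl)
    · exact hq0 ▸ h.cosSlope_left
    · exact hqκ ▸ h.cosSlope_right
  refine ⟨q, hmono, hq0, hqκ,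
    fun i hi => ⟨?_, ?_, (hpoint i hi.le).1, (hpoint (i + 1) hi).1, ?_⟩,
    fun i hi hiκ => sinValue_ratio_mul_of_U_eq_zero hp hμ ?_⟩
  · exact mul_nonneg hr (h.nonneg.trans (hq0 ▸ hmono i.zero_le))
  · exact mul_le_mul_of_nonneg_left (hmono i.le_succ) hr
  · rw [(hpoint i hi.le).2, (hpoint (i + 1) hi).2]
    ring
  · rw [htrace i hiκ.le, chebyshev_U_eval_mul_cos_eq_zero hs hi hiκ]

theorem NeumannPair.exists_sinValue_eq_zero (h : NeumannPair μ u v) :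
    ∃ l ∈ Set.Ioo (κ / a * u) (κ / a * v), sinValue μ l = 0 := by
  have hr := hp.ratio_pos
  have hne := cosValue_ne_zero_of_cosSlope_eq_zero hp hμ h.cosSlope_left
  rcases hp.two_le.eq_or_lt with rfl | hκ
  · obtain ⟨q, ⟨huq, hqv⟩, hq⟩ :=
      exists_mem_Ioo_eq_zero_of_eq_neg continuous_cosValue h.le hne h.cosValue_right
    refine ⟨_, ⟨mul_lt_mul_of_pos_left huq hr, mul_lt_mul_of_pos_left hqv hr⟩, ?_⟩
    have ha := hp.a_pos.ne'
    have hsq := cosValue_sq hp hμ q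
    have htrace := halfTrace_eq hp hμ q
    rw [hq] at hsq htrace
    rw [sinValue_ratio_mul hp hμ, htrace]
    simp only [Nat.cast_ofNat, Int.reduceSub, sub_self, U_one, U_zero, Polynomial.eval_mul,
      Polynomial.eval_ofNat, Polynomial.eval_X, Polynomial.eval_one]
    field_simp
    linear_combination -b * hsq
  · obtain ⟨q, hmono, rfl, rfl, hpair, hsin⟩ := h.split hp hμ
    have hpair1 := hpair 1 (by lia)
    have hsin1 := hsin 1 (by lia) (by lia)
    have hne1 : sinValue μ (κ / a * q 1) ≠ 0 := by
      rw [hsin1]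
      exact mul_ne_zero (neg_ne_zero.mpr hp.b_pos.ne')
        (cosValue_ne_zero_of_cosSlope_eq_zero hp hμ hpair1.cosSlope_left)
    obtain ⟨l, ⟨hl1, hl2⟩, hl⟩ := exists_mem_Ioo_eq_zero_of_eq_neg continuous_sinValue hpair1.le
      hne1 (by rw [hsin 2 (by lia) hκ, hsin1, hpair1.cosValue_right, mul_neg])
    exact ⟨l, ⟨(mul_le_mul_of_nonneg_left (hmono zero_le_one) hr.le).trans_lt hl1,
      hl2.trans_le (mul_le_mul_of_nonneg_left (hmono hp.two_le) hr.le)⟩, hl⟩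

theorem NeumannPair.add_pow_le {N : ℝ → ℝ}
    (hN : ∀ u v l, 0 ≤ u → u < l → l ≤ v → sinValue μ l = 0 → N u + 1 ≤ N v) (j : ℕ)
    (h : NeumannPair μ u v) : N ((κ / a) ^ (j + 1) * u) + κ ^ j ≤ N ((κ / a) ^ (j + 1) * v) := by
  induction j generalizing u v with
  | zero =>
    obtain ⟨l, ⟨hul, hlv⟩, hl⟩ := h.exists_sinValue_eq_zero hp hμ
    simpa using hN _ _ l (mul_nonneg hp.ratio_pos.le h.nonneg) hul hlv.le hl
  | succ j ih =>
    obtain ⟨q, -, rfl, rfl, hpair, -⟩ := h.split hp hμ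
    have hstep (i) (hi : i ∈ Finset.range κ) : (κ : ℝ) ^ j ≤
        N ((κ / a) ^ (j + 2) * q (i + 1)) - N ((κ / a) ^ (j + 2) * q i) := by
      have := ih (hpair i (Finset.mem_range.mp hi))
      rw [← mul_assoc, ← mul_assoc, ← pow_succ] at this
      exact le_sub_iff_add_le'.mpr this
    have hsum := Finset.card_nsmul_le_sum _ _ _ hstep
    rw [Finset.sum_range_sub (fun i => N ((κ / a) ^ (j + 2) * q i)), Finset.card_range,
      nsmul_eq_mul, ← _root_.pow_succ'] at hsum
    exact le_sub_iff_add_le'.mp hsum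

section Escape

theorem cosSlope_halfTrace_ratio_mul_le {s θ : ℝ} (hs : s ^ 2 = 1) (hC : s * cosSlope μ w ≤ 0)
    (hlow : cos (π / κ) ≤ s * halfTrace μ a b w) (hup : s * halfTrace μ a b w ≤ cos θ)
    (hθ0 : 0 ≤ θ) (hθ : θ ≤ π) :
    s ^ κ * cosSlope μ (κ / a * w) ≤ 0 ∧
      s ^ κ * halfTrace μ a b (κ / a * w) ≤ cos (κ * θ) := by
  have hκ : κ ≠ 0 := (zero_lt_two.trans_le hp.two_le).ne'
  have ha := hp.a_pos
  have hb := hp.b_pos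
  have ha1 : 0 < 1 / a - 1 := sub_pos.mpr ((one_lt_div ha).mpr hp.a_lt_one)
  have hUC : s ^ κ * ((U ℝ (κ - 1)).eval (halfTrace μ a b w) * cosSlope μ w) ≤ 0 := by
    rw [← mul_assoc, ← mul_chebyshev_U_eval_mul_of_sq_eq_one hs, mul_right_comm]
    exact mul_nonpos_of_nonpos_of_nonneg hC
      (chebyshev_U_eval_nonneg hp.two_le hlow (hup.trans (cos_le_one θ)))
  have hT : s ^ κ * (T ℝ κ).eval (halfTrace μ a b w) ≤ cos (κ * θ) := by
    rw [← chebyshev_T_eval_mul_of_sq_eq_one hs]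
    exact chebyshev_T_eval_le_cos hκ hlow hθ0 hup hθ
  constructor
  · rw [cosSlope_ratio_mul hp hμ, ← mul_div_assoc, ← mul_div_assoc]
    exact div_nonpos_of_nonpos_of_nonneg hUC ha.le
  · rw [halfTrace_ratio_mul hp hμ, mul_add, mul_left_comm]
    exact (add_le_of_nonpos_right (mul_nonpos_of_nonneg_of_nonpos (by positivity) hUC)).trans hT

theorem exists_neumannPair_of_halfTrace_le_cos (hu0 : 0 ≤ u) (hu : cosSlope μ u = 0)
    (huw : u ≤ w) (hw : cosValue μ u * halfTrace μ a b w ≤ cos (π / κ)) :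
    ∃ q ∈ Set.Icc u w, NeumannPair μ (κ / a * u) (κ / a * q) ∧
      sinValue μ (κ / a * q) = -b * cosValue μ (κ / a * q) := by
  have hs := cosValue_sq_of_cosSlope_eq_zero hp hμ hu
  have hcont : Continuous fun x => cosValue μ u * halfTrace μ a b x := by fun_prop
  have hstart : cosValue μ u * halfTrace μ a b u = 1 := by
    rw [halfTrace_of_cosSlope_eq_zero hp hμ hu, ← sq, hs]
  obtain ⟨q, hq, hqcos⟩ := intermediate_value_Icc' huw hcont.continuousOn
    ⟨hw, (cos_le_one _).trans hstart.ge⟩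
  have htrace : halfTrace μ a b q = cosValue μ u * cos ((1 : ℕ) * π / κ) := by
    rw [Nat.cast_one, one_mul, ← hqcos, ← mul_assoc, ← sq, hs, one_mul]
  have h1κ : 1 < κ := hp.two_le
  obtain ⟨hCq, hAq⟩ := cosSlope_ratio_mul_of_halfTrace_eq hp hμ hs h1κ.le htrace (by lia)
  refine ⟨q, hq, ⟨mul_nonneg hp.ratio_pos.le hu0, mul_le_mul_of_nonneg_left hq.1 hp.ratio_pos.le,
    cosSlope_ratio_mul_of_cosSlope_eq_zero hp hμ hu, hCq, ?_⟩,
    sinValue_ratio_mul_of_U_eq_zero hp hμ ?_⟩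
  · rw [hAq, cosValue_ratio_mul_of_cosSlope_eq_zero hp hμ hu]
    ring
  · rw [htrace, chebyshev_U_eval_mul_cos_eq_zero hs one_pos h1κ]

-- As long as the angle `arccos (± halfTrace)` stays below `π / κ`, rescaling by `κ / a` multiplies
-- it by at least `κ`.
theorem exists_neumannPair_pow_of_halfTrace_le_cos (n : ℕ) (hu0 : 0 ≤ u) (hu : cosSlope μ u = 0)
    (huw : u ≤ w) (hC : cosValue μ u * cosSlope μ w ≤ 0)
    (hw : cosValue μ u * halfTrace μ a b w ≤ cos (π / κ ^ (n + 1))) :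
    ∃ i ≤ n, ∃ q ∈ Set.Icc u w, NeumannPair μ ((κ / a) ^ (i + 1) * u) ((κ / a) ^ (i + 1) * q) ∧
      sinValue μ ((κ / a) ^ (i + 1) * q) = -b * cosValue μ ((κ / a) ^ (i + 1) * q) := by
  have hr := hp.ratio_pos
  have hκ := hp.cast_pos
  induction n generalizing u w with
  | zero =>
    obtain ⟨q, hq, hpair⟩ := exists_neumannPair_of_halfTrace_le_cos hp hμ hu0 hu huw
      (by simpa using hw)
    exact ⟨0, le_rfl, q, hq, by simpa using hpair⟩
  | succ n ih =>
    rcases le_total (cosValue μ u * halfTrace μ a b w) (cos (π / κ)) with hexit | hstay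
    · obtain ⟨q, hq, hpair⟩ := exists_neumannPair_of_halfTrace_le_cos hp hμ hu0 hu huw hexit
      exact ⟨0, zero_le, q, hq, by simpa using hpair⟩
    have hangle : (κ : ℝ) * (π / κ ^ (n + 2)) = π / κ ^ (n + 1) := by
      rw [pow_succ]
      field_simp
    have hθ : π / (κ : ℝ) ^ (n + 2) ≤ π :=
      div_le_self pi_pos.le (one_le_pow₀ (one_le_two.trans hp.two_le_cast))
    obtain ⟨hCw, hTw⟩ := cosSlope_halfTrace_ratio_mul_le hp hμ
      (cosValue_sq_of_cosSlope_eq_zero hp hμ hu) hC hstay hw (by positivity) hθ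
    rw [← cosValue_ratio_mul_of_cosSlope_eq_zero hp hμ hu] at hCw hTw
    obtain ⟨i, hi, q, hq, hpair⟩ := ih (mul_nonneg hr.le hu0)
      (cosSlope_ratio_mul_of_cosSlope_eq_zero hp hμ hu) (mul_le_mul_of_nonneg_left huw hr.le)
      hCw (hangle ▸ hTw)
    refine ⟨i + 1, Nat.succ_le_succ hi, q / (κ / a),
      ⟨(le_div_iff₀' hr).mpr hq.1, (div_le_iff₀' hr).mpr hq.2⟩, ?_⟩
    have hscale (x : ℝ) : (κ / a) ^ (i + 1 + 1) * x = (κ / a) ^ (i + 1) * (κ / a * x) := by ring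
    rwa [hscale, hscale, mul_div_cancel₀ _ hr.ne']

end Escape

end KreinString

/-! ### Closely spaced Neumann pairs -/

namespace KreinString

open unitInterval

variable {μ : Measure I} [IsFiniteMeasure μ] {κ : ℕ} {a b : ℝ} (hp : CantorParams κ a b)
  (hμ : IsSelfSimilar μ κ a b)

theorem exists_eventually_cosValue_mul_cosSlope_le (hμ0 : μ ≠ 0) {p : ℝ} (hC : cosSlope μ p = 0) :
    ∃ k > 0, ∀ᶠ l in 𝓝[≥] p, cosValue μ p * cosSlope μ l ≤ -(k * (l - p)) := by
  set overlap : ℝ → ℝ := fun l => ∫ t, solution μ l 1 0 t * solution μ p 1 0 t ∂μ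
  have hcont : Continuous overlap := continuous_integral_of_continuous_uncurry μ
    ((continuous_solution_uncurry 1 0).mul (by fun_prop))
  have hpos : 0 < overlap p := integral_sq_solution_pos hμ0 p
  refine ⟨overlap p / 2, half_pos hpos, ?_⟩
  filter_upwards [self_mem_nhdsWithin, (hcont.continuousAt.eventually
    (lt_mem_nhds (half_lt_self hpos))).filter_mono nhdsWithin_le_nhds] with l hl hoverlap
  rw [mul_comm, cosSlope_mul_cosValue l hC, ← neg_sub l p, neg_mul, mul_comm]
  exact neg_le_neg (mul_le_mul_of_nonneg_right hoverlap.le (sub_nonneg.mpr hl))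

include hp hμ

theorem cosValue_mul_cosValue_le_one {p l : ℝ} (hC : cosSlope μ p = 0)
    (hCl : cosValue μ p * cosSlope μ l ≤ 0) (hBl : 0 ≤ cosValue μ p * sinValue μ l) :
    cosValue μ p * cosValue μ l ≤ 1 := by
  have hp1 := cosValue_sq_of_cosSlope_eq_zero hp hμ hC
  have hprod : (cosValue μ p * cosValue μ l) ^ 2 =
      1 + cosValue μ p * sinValue μ l * (cosValue μ p * cosSlope μ l) := by
    linear_combination cosValue μ p ^ 2 * cosValue_sq hp hμ l + hp1
  have hsq : (cosValue μ p * cosValue μ l) ^ 2 ≤ 1 :=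
    hprod.trans_le (add_le_of_nonpos_right (mul_nonpos_of_nonneg_of_nonpos hBl hCl))
  exact le_of_abs_le ((sq_le_one_iff_abs_le_one _).mp hsq)

theorem exists_eventually_cosValue_mul_halfTrace_le (hμ0 : μ ≠ 0) {p : ℝ}
    (hC : cosSlope μ p = 0) (hB : 0 < cosValue μ p * sinValue μ p) :
    ∃ k > 0, ∀ᶠ l in 𝓝[≥] p, cosValue μ p * cosSlope μ l ≤ 0 ∧
      cosValue μ p * halfTrace μ a b l ≤ 1 - k * (l - p) := by
  have ha := hp.a_pos
  have hb := hp.b_pos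
  obtain ⟨k, hk, hslope⟩ := exists_eventually_cosValue_mul_cosSlope_le hμ0 hC
  have hcont : Continuous fun l => cosValue μ p * sinValue μ l := by fun_prop
  refine ⟨b / (2 * a) * k, by positivity, ?_⟩
  filter_upwards [self_mem_nhdsWithin, hslope, (hcont.continuousAt.eventually
    (lt_mem_nhds hB)).filter_mono nhdsWithin_le_nhds] with l hl hCl hBl
  have hCl0 : cosValue μ p * cosSlope μ l ≤ 0 :=
    hCl.trans (neg_nonpos.mpr (mul_nonneg hk.le (sub_nonneg.mpr hl)))
  refine ⟨hCl0, ?_⟩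
  calc cosValue μ p * halfTrace μ a b l
      = cosValue μ p * cosValue μ l + b / (2 * a) * (cosValue μ p * cosSlope μ l) := by
        rw [halfTrace_eq hp hμ]
        ring
    _ ≤ 1 + b / (2 * a) * -(k * (l - p)) := by
        gcongr
        exact cosValue_mul_cosValue_le_one hp hμ hC hCl0 hBl.le
    _ = 1 - b / (2 * a) * k * (l - p) := by ring

theorem exists_eventually_neumannPair_pow (hμ0 : μ ≠ 0) {p : ℝ} (hp0 : 0 ≤ p)
    (hC : cosSlope μ p = 0) (hB : 0 < cosValue μ p * sinValue μ p) :
    ∃ K, ∀ᶠ n : ℕ in atTop, ∃ i ≤ n, ∃ q ∈ Set.Icc p (p + K / (κ ^ (n + 1)) ^ 2),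
      NeumannPair μ ((κ / a) ^ (i + 1) * p) ((κ / a) ^ (i + 1) * q) ∧
      sinValue μ ((κ / a) ^ (i + 1) * q) = -b * cosValue μ ((κ / a) ^ (i + 1) * q) := by
  obtain ⟨k, hk, hdrop⟩ := exists_eventually_cosValue_mul_halfTrace_le hp hμ hμ0 hC hB
  have hκ1 : (1 : ℝ) < κ := one_lt_two.trans_le hp.two_le_cast
  set w : ℕ → ℝ := fun n => p + π ^ 2 / (2 * k) / ((κ : ℝ) ^ (n + 1)) ^ 2
  have hpw (n : ℕ) : p ≤ w n := le_add_of_nonneg_right (by positivity)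
  have hw : Tendsto w atTop (𝓝[≥] p) := by
    refine tendsto_nhdsWithin_iff.mpr ⟨?_, .of_forall hpw⟩
    have hpow : Tendsto (fun n : ℕ => ((κ : ℝ) ^ (n + 1)) ^ 2) atTop atTop :=
      (tendsto_pow_atTop two_ne_zero).comp
        ((tendsto_pow_atTop_atTop_of_one_lt hκ1).comp (tendsto_add_atTop_nat 1))
    simpa using (tendsto_const_nhds.div_atTop hpow).const_add p
  refine ⟨π ^ 2 / (2 * k), (hw.eventually hdrop).mono fun n ⟨hCw, hTw⟩ => ?_⟩
  refine exists_neumannPair_pow_of_halfTrace_le_cos hp hμ n hp0 hC (hpw n) hCw ?_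
  calc cosValue μ p * halfTrace μ a b (w n)
      ≤ 1 - k * (w n - p) := hTw
    _ = 1 - (π / κ ^ (n + 1)) ^ 2 / 2 := by
        rw [add_sub_cancel_left, div_pow]
        field_simp
    _ ≤ cos (π / κ ^ (n + 1)) := one_sub_sq_div_two_le_cos

theorem exists_cosSlope_eq_zero_and_pos (hμ0 : μ ≠ 0) :
    ∃ p > 0, cosSlope μ p = 0 ∧ 0 < cosValue μ p * sinValue μ p := by
  obtain ⟨K, hK⟩ := exists_eventually_neumannPair_pow hp hμ hμ0 le_rfl cosSlope_zero
    (by rw [cosValue_zero, sinValue_zero]; norm_num)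
  obtain ⟨n, i, -, q, -, hpair, hsin⟩ := hK.exists
  set v := (κ / a) ^ (i + 1) * q
  rw [mul_zero] at hpair
  have hv : 0 < v := by
    refine hpair.le.lt_of_ne fun h0 => ?_
    have := hpair.cosValue_right
    rw [← h0, cosValue_zero] at this
    norm_num at this
  have hslope := hpair.cosSlope_right
  refine ⟨κ / a * v, mul_pos hp.ratio_pos hv, cosSlope_ratio_mul_of_cosSlope_eq_zero hp hμ hslope,
    ?_⟩
  have hfactor : 0 < b * (κ - 1 - κ * a) := by
    refine mul_pos hp.b_pos ?_
    have := mul_pos (sub_pos.mpr (one_lt_two.trans_le hp.two_le_cast)) hp.b_pos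
    linarith [hp.two_le_cast, hp.length_eq]
  rw [sinValue_ratio_mul_of_cosSlope_eq_zero hp hμ hslope hsin, mul_left_comm, ← sq,
    cosValue_sq_of_cosSlope_eq_zero hp hμ (cosSlope_ratio_mul_of_cosSlope_eq_zero hp hμ hslope),
    mul_one]
  exact hfactor

variable {D c : ℝ}

theorem exists_neumannPair_rpow_sub_lt (hμ0 : μ ≠ 0) (hD0 : 0 ≤ D) (hD1 : D ≤ 1)
    (hD : (κ / a) ^ D = κ) {δ : ℝ} (hδ : 0 < δ) :
    ∃ u v, 0 < u ∧ NeumannPair μ u v ∧ v ^ D - u ^ D < δ := by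
  obtain ⟨p, hp0, hC, hB⟩ := exists_cosSlope_eq_zero_and_pos hp hμ hμ0
  obtain ⟨K, hK⟩ := exists_eventually_neumannPair_pow hp hμ hμ0 hp0.le hC hB
  have hκ1 : (1 : ℝ) < κ := one_lt_two.trans_le hp.two_le_cast
  have hr := hp.ratio_pos
  have hsmall : Tendsto (fun n : ℕ => p ^ D * K / p / (κ : ℝ) ^ (n + 1)) atTop (𝓝 0) :=
    tendsto_const_nhds.div_atTop
      ((tendsto_pow_atTop_atTop_of_one_lt hκ1).comp (tendsto_add_atTop_nat 1))
  obtain ⟨n, ⟨i, hin, q, ⟨hpq, hqp⟩, hpair, -⟩, hn⟩ :=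
    (hK.and (hsmall.eventually (gt_mem_nhds hδ))).exists
  refine ⟨_, _, mul_pos (pow_pos hr _) hp0, hpair, lt_of_le_of_lt ?_ hn⟩
  have hpow : ((κ / a : ℝ) ^ (i + 1)) ^ D = κ ^ (i + 1) := by
    rw [← rpow_pow_comm hr.le, hD]
  calc ((κ / a) ^ (i + 1) * q) ^ D - ((κ / a) ^ (i + 1) * p) ^ D
      = κ ^ (i + 1) * (q ^ D - p ^ D) := by
        rw [mul_rpow (by positivity) (hp0.le.trans hpq), mul_rpow (by positivity) hp0.le, hpow]
        ring
    _ ≤ κ ^ (n + 1) * ((p + K / (κ ^ (n + 1)) ^ 2) ^ D - p ^ D) := by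
        have : 0 ≤ q ^ D - p ^ D := sub_nonneg.mpr (rpow_le_rpow hp0.le hpq hD0)
        have : 0 ≤ q := hp0.le.trans hpq
        gcongr
        exact hκ1.le
    _ ≤ κ ^ (n + 1) * (p ^ D * (K / (κ ^ (n + 1)) ^ 2 / p)) := by
        gcongr
        exact add_rpow_sub_rpow_le hp0 (le_add_iff_nonneg_right p |>.mp (hpq.trans hqp)) hD1
    _ = p ^ D * K / p / κ ^ (n + 1) := by
        field_simp

variable {N : ℝ → ℝ} (hN : ∀ u v l, 0 ≤ u → u < l → l ≤ v → sinValue μ l = 0 → N u + 1 ≤ N v)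
include hN

theorem NeumannPair.inv_le_mul_rpow_sub_rpow {u v : ℝ} (h : NeumannPair μ u v) (hu : 0 < u)
    (hD : (κ / a) ^ D = κ) (hlim : Tendsto (fun L => N L / L ^ D) atTop (𝓝 c)) :
    (κ : ℝ)⁻¹ ≤ c * (v ^ D - u ^ D) := by
  have hκ := hp.cast_pos
  have hscaled {x : ℝ} (hx : 0 < x) := (tendsto_pow_mul_div_pow hp.one_lt_ratio hD hlim hx).comp
    (tendsto_add_atTop_nat 1)
  rw [mul_sub]
  refine ge_of_tendsto' ((hscaled (hu.trans_le h.le)).sub (hscaled hu)) fun j => ?_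
  rw [Function.comp_apply, Function.comp_apply, ← sub_div, le_div_iff₀ (by positivity), pow_succ,
    mul_comm, mul_assoc, mul_inv_cancel₀ hκ.ne', mul_one, le_sub_iff_add_le']
  simpa only [pow_succ] using h.add_pow_le hp hμ hN j

theorem not_tendsto_div_rpow (hμ0 : μ ≠ 0) (hD0 : 0 ≤ D) (hD1 : D ≤ 1) (hD : (κ / a) ^ D = κ) :
    ¬Tendsto (fun L => N L / L ^ D) atTop (𝓝 c) := by
  intro hlim
  have hκ := hp.cast_pos
  obtain ⟨u, v, hu, hpair, hlt⟩ := exists_neumannPair_rpow_sub_lt hp hμ hμ0 hD0 hD1 hD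
    (δ := (κ : ℝ)⁻¹ / (|c| + 1)) (by positivity)
  have hdiff : 0 ≤ v ^ D - u ^ D := sub_nonneg.mpr (rpow_le_rpow hu.le hpair.le hD0)
  refine (hpair.inv_le_mul_rpow_sub_rpow hp hμ hN hu hD hlim).not_gt ?_
  have hc : c ≤ |c| + 1 := (le_abs_self c).trans (le_add_of_nonneg_right zero_le_one)
  calc c * (v ^ D - u ^ D) ≤ (|c| + 1) * (v ^ D - u ^ D) := by gcongr
    _ < (κ : ℝ)⁻¹ := (lt_div_iff₀' (by positivity)).mp hlt

end KreinString

/-! ### The measure of a Cantor-type function -/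

section CantorMeasure

open unitInterval KreinString

theorem nullSingletonClass_of_continuous_measureReal_Iic {μ : Measure ℝ} [IsProbabilityMeasure μ]
    (h : Continuous fun x => μ.real (Set.Iic x)) : NullSingletonClass μ where
  measure_singleton x := by
    have hcdf : ContinuousAt (ProbabilityTheory.cdf μ) x := by
      simpa only [← ProbabilityTheory.cdf_eq_real] using h.continuousAt
    rw [← ProbabilityTheory.measure_cdf μ, StieltjesFunction.measure_singleton,
      leftLim_eq_of_tendsto (hcdf.tendsto.mono_left nhdsWithin_le_nhds),
      sub_self, ENNReal.ofReal_zero]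

variable {κ : ℕ} {a b : ℝ} {P : ℝ → ℝ} (hp : CantorParams κ a b) (hP : CantorType κ a b P)

section CantorType

include hp hP

theorem CantorType.apply_cell_eq_add {k : ℕ} (hk : k < κ) (t : I) :
    P (cell a b k t) = P (cell a b k 0) + P t / κ := by
  obtain ⟨-, hP0, -, -, hscale⟩ := hP
  obtain ⟨c, hc⟩ := hscale k (Nat.le_sub_one_of_lt hk)
  have ht := hc t t.2
  have h0 := hc 0 (Set.left_mem_Icc.mpr zero_le_one)
  rw [hP0, mul_zero, add_zero] at h0
  rw [coe_cell hp hk, coe_cell hp hk, Set.Icc.coe_zero, mul_zero, add_zero]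
  have hκ := hp.cast_pos
  field_simp
  linarith

theorem CantorType.apply_eq_of_mem_gap {k : ℕ} (hk : k + 1 < κ) {x : I}
    (hx : x ∈ Set.Icc (cell a b k 1) (cell a b (k + 1) 0)) : P x = P (cell a b k 1) := by
  obtain ⟨hcont, -, -, hgap, -⟩ := hP
  obtain ⟨c, hc⟩ := hgap (k + 1) (by lia) (by lia)
  have hlt : cell a b k 1 < cell a b (k + 1) 0 := by
    rw [← Subtype.coe_lt_coe, coe_cell hp hk, coe_cell hp (k.lt_succ_self.trans hk)]
    push_cast
    linarith [hp.b_pos]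
  have hconst : Set.EqOn (fun t : I => P t) (fun _ => c)
      (Set.Icc (cell a b k 1) (cell a b (k + 1) 0)) := by
    refine Set.EqOn.of_subset_closure (s := Set.Ioo (cell a b k 1) (cell a b (k + 1) 0))
      (fun t ht => hc t ?_) (continuousOn_iff_continuous_domRestrict.mp hcont).continuousOn
      continuousOn_const Set.Ioo_subset_Icc_self (closure_Ioo hlt.ne).ge
    rw [Set.mem_Ioo, ← Subtype.coe_lt_coe, ← Subtype.coe_lt_coe, coe_cell hp hk,
      coe_cell hp (k.lt_succ_self.trans hk)] at ht
    simpa using ht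
  exact (hconst hx).trans (hconst (Set.left_mem_Icc.mpr hlt.le)).symm

theorem CantorType.apply_cell {k : ℕ} (hk : k < κ) (t : I) : P (cell a b k t) = (k + P t) / κ := by
  induction k generalizing t with
  | zero =>
    rw [hP.apply_cell_eq_add hp hk, cell_zero_zero hp, Set.Icc.coe_zero, hP.2.1]
    simp
  | succ k ih =>
    have hlt : k < κ := k.lt_succ_self.trans hk
    have hle := cell_le_cell_of_lt hp k.lt_succ_self hk 1 0
    rw [hP.apply_cell_eq_add hp hk, hP.apply_eq_of_mem_gap hp hk ⟨hle, le_rfl⟩, ih hlt,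
      Set.Icc.coe_one, hP.2.2.1]
    push_cast
    ring

end CantorType

include hp

theorem exists_last_cell_zero_le (x : I) :
    ∃ k < κ, cell a b k 0 ≤ x ∧ ∀ i, k < i → i < κ → x < cell a b i 0 := by
  classical
  have h1 : 1 ≤ κ := one_le_two.trans hp.two_le
  set k := Nat.findGreatest (fun k => cell a b k 0 ≤ x) (κ - 1)
  refine ⟨k, (Nat.findGreatest_le _).trans_lt (by lia),
    Nat.findGreatest_spec (P := fun k => cell a b k 0 ≤ x) (Nat.zero_le _) ?_, fun i hki hi =>
    not_le.mp (Nat.findGreatest_is_greatest hki (Nat.le_sub_one_of_lt hi))⟩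
  rw [cell_zero_zero hp]
  exact x.2.1

variable {m : Measure I} [IsProbabilityMeasure m]

theorem sum_measureReal_preimage_cell {k : ℕ} (hk : k < κ) {x t : I} (hleft : cell a b k 0 ≤ x)
    (hright : ∀ i, k < i → i < κ → x < cell a b i 0) (ht : ∀ s, cell a b k s ≤ x ↔ s ≤ t) :
    ∑ i ∈ Finset.range κ, m.real (cell a b i ⁻¹' Set.Iic x) = k + m.real (Set.Iic t) := by
  have hpre : cell a b k ⁻¹' Set.Iic x = Set.Iic t := Set.ext ht
  have hfull (i) (hi : i ∈ Finset.range k) : m.real (cell a b i ⁻¹' Set.Iic x) = 1 := by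
    have : cell a b i ⁻¹' Set.Iic x = Set.univ := Set.eq_univ_of_forall fun s =>
      (cell_le_cell_of_lt hp (Finset.mem_range.mp hi) hk s 0).trans hleft
    rw [this, probReal_univ]
  rw [← Finset.sum_subset (Finset.range_subset_range.mpr (Nat.succ_le_of_lt hk)),
    Finset.sum_range_succ, hpre, Finset.sum_congr rfl hfull]
  · simp
  · intro i hiκ hi
    rw [Finset.mem_range] at hiκ
    rw [Finset.mem_range, not_lt] at hi
    have : cell a b i ⁻¹' Set.Iic x = ∅ := Set.eq_empty_of_forall_notMem fun s hs =>
      ((hright i hi hiκ).trans_le ((strictMono_cell hp hiκ).monotone s.2.1)).not_ge hs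
    rw [this, measureReal_empty]

include hP

theorem CantorType.sum_measureReal_preimage_cell (hm : ∀ x : I, m.real (Set.Iic x) = P x) (x : I) :
    ∑ i ∈ Finset.range κ, m.real (cell a b i ⁻¹' Set.Iic x) = κ * P x := by
  have hκ := hp.cast_pos.ne'
  obtain ⟨k, hk, hleft, hright⟩ := exists_last_cell_zero_le hp x
  rcases le_or_gt x (cell a b k 1) with hx | hx
  · obtain ⟨t, rfl⟩ := mem_range_of_exists_le_of_exists_ge (cell a b k).continuous
      ⟨0, hleft⟩ ⟨1, hx⟩
    rw [_root_.sum_measureReal_preimage_cell hp hk hleft hright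
      fun s => (strictMono_cell hp hk).le_iff_le, hm, hP.apply_cell hp hk, mul_div_cancel₀ _ hκ]
  · have hk1 : k + 1 < κ := by
      by_contra hlast
      obtain rfl : k = κ - 1 := by lia
      exact (hx.trans_eq' (cell_last_one hp)).not_ge x.2.2
    rw [_root_.sum_measureReal_preimage_cell hp hk hleft hright (t := 1) fun s =>
        ⟨fun _ => s.2.2, fun _ => ((strictMono_cell hp hk).monotone s.2.2).trans hx.le⟩, hm,
      hP.apply_eq_of_mem_gap hp hk1 ⟨hx.le, (hright _ k.lt_succ_self hk1).le⟩,
      hP.apply_cell hp hk, mul_div_cancel₀ _ hκ]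

theorem CantorType.isSelfSimilar (hm : ∀ x : I, m.real (Set.Iic x) = P x) :
    IsSelfSimilar m κ a b := by
  have hκ := hp.cast_pos.ne'
  have hmap : m = ENNReal.ofReal (κ : ℝ)⁻¹ • ∑ k ∈ Finset.range κ, m.map (cell a b k) := by
    refine Measure.ext_of_Iic _ _ fun x => ?_
    have hpre (k : ℕ) : m.map (cell a b k) (Set.Iic x) =
        ENNReal.ofReal (m.real (cell a b k ⁻¹' Set.Iic x)) := by
      rw [Measure.map_apply (cell a b k).continuous.measurable measurableSet_Iic,
        ofReal_measureReal]
    simp only [Measure.smul_apply, Measure.finsetSum_apply, smul_eq_mul, hpre]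
    rw [← ENNReal.ofReal_sum_of_nonneg fun _ _ => measureReal_nonneg,
      ← ENNReal.ofReal_mul (by positivity), hP.sum_measureReal_preimage_cell hp hm,
      inv_mul_cancel_left₀ hκ, ← hm, ofReal_measureReal]
  intro f
  conv_lhs => rw [hmap]
  rw [integral_smul_measure,
    integral_finsetSum_measure fun k _ => integrable_of_continuous _ f.continuous,
    ENNReal.toReal_ofReal (by positivity), smul_eq_mul]
  congr 1
  refine Finset.sum_congr rfl fun k _ => ?_
  exact integral_map (by fun_prop) (by fun_prop)

end CantorMeasure

/-! ### Dirichlet eigenvalues -/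

section Eigenvalues

open unitInterval KreinString

theorem integral_setIntegral_eq_volterra {m : Measure I} [IsFiniteMeasure m] (y : C(I, ℝ)) (x : I) :
    ∫ s in (0 : ℝ)..x, ∫ t in {t : I | (t : ℝ) ≤ s}, y t ∂m = volterra m y x := by
  set F : ℝ → I → ℝ := fun s t => {q : ℝ × I | (q.2 : ℝ) ≤ q.1}.indicator (fun q => y q.2) (s, t)
  have hmeas : MeasurableSet {q : ℝ × I | (q.2 : ℝ) ≤ q.1} :=
    measurableSet_le (by fun_prop) (by fun_prop)
  have hinner (s : ℝ) : ∫ t in {t : I | (t : ℝ) ≤ s}, y t ∂m = ∫ t, F s t ∂m :=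
    (integral_indicator (measurableSet_le (by fun_prop) (by fun_prop))).symm
  have h_integrable : Integrable F.uncurry ((volume.restrict (Set.Icc 0 (x : ℝ))).prod m) := by
    refine ((integrable_const ‖y‖).mono' ?_ (.of_forall fun q => ?_)).indicator hmeas
    · fun_prop
    · exact y.norm_coe_le_norm q.2
  have houter (t : I) : ∫ s in Set.Icc 0 (x : ℝ), F s t = max (x - t : ℝ) 0 * y t := by
    have hset : (fun s => F s t) = (Set.Ici (t : ℝ)).indicator fun _ => y t := rfl
    have hinter : Set.Icc 0 (x : ℝ) ∩ Set.Ici (t : ℝ) = Set.Icc (t : ℝ) x := by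
      rw [← Set.Ici_inter_Iic, Set.inter_right_comm, Set.Ici_inter_Ici,
        sup_eq_right.mpr t.2.1, Set.Ici_inter_Iic]
    rw [hset, setIntegral_indicator measurableSet_Ici, hinter, setIntegral_const,
      Real.volume_real_Icc, smul_eq_mul]
  rw [intervalIntegral.integral_of_le x.2.1, ← integral_Icc_eq_integral_Ioc]
  simp only [hinner]
  rw [integral_integral_swap h_integrable, volterra_apply]
  simp only [houter]

theorem setIntegral_map_val_Icc (m : Measure I) (y : C(I, ℝ)) (s : ℝ) :
    ∫ t in Set.Icc 0 s, Set.IccExtend zero_le_one y t ∂(m.map (↑)) =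
      ∫ t in {t : I | (t : ℝ) ≤ s}, y t ∂m := by
  have hpre : ((↑) : I → ℝ) ⁻¹' Set.Icc 0 s = {t : I | (t : ℝ) ≤ s} :=
    Set.ext fun t => and_iff_right t.2.1
  rw [setIntegral_map measurableSet_Icc (by fun_prop) (by fun_prop), hpre]
  simp only [Set.IccExtend_val]

theorem isDirichletEigen_of_sinValue_eq_zero {m : Measure I} [IsFiniteMeasure m]
    [NullSingletonClass (m.map ((↑) : I → ℝ))] {l : ℝ} (h : sinValue m l = 0) :
    IsDirichletEigen (m.map (↑)) l := by
  set y := solution m l 0 1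
  have hy : IsSolution m l 0 1 y := isSolution_solution
  set yExt : ℝ → ℝ := Set.IccExtend zero_le_one y
  have hext (x : I) : yExt x = y x := Set.IccExtend_val ..
  have hy0 : yExt 0 = 0 := (hext 0).trans hy.apply_zero
  set g : ℝ → ℝ := fun x => 1 - l * ∫ t in Set.Icc 0 x, yExt t ∂(m.map (↑))
  have hcont : ContinuousOn (fun x => ∫ t in Set.Icc 0 x, yExt t ∂(m.map (↑))) (Set.Icc 0 1) :=
    intervalIntegral.continuousOn_primitive_Icc
      (Continuous.continuousOn (by fun_prop)).integrableOn_Icc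
  refine ⟨yExt, g, Continuous.continuousOn (by fun_prop), by fun_prop, ?_, fun x hx => ?_,
    fun x _ => by simp [g], hy0, (hext 1).trans h⟩
  · by_contra! hzero
    have hy_zero : y = 0 := ContinuousMap.ext fun t => (hext t).symm.trans (hzero t t.2)
    simpa [hy_zero] using hy 1
  · lift x to I using hx
    have h_integrable_x :
        IntervalIntegrable (fun s => ∫ t in Set.Icc 0 s, yExt t ∂(m.map (↑))) volume 0 x :=
      (hcont.mono (Set.Icc_subset_Icc_right x.2.2)).intervalIntegrable_of_Icc x.2.1
    rw [hy0, intervalIntegral.integral_sub intervalIntegrable_const (h_integrable_x.const_mul l),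
      intervalIntegral.integral_const_mul]
    simp only [yExt, setIntegral_map_val_Icc]
    rw [integral_setIntegral_eq_volterra, Set.IccExtend_val, hy x]
    simp

theorem ncard_inter_Ioc_add_one_le {S : Set ℝ} {u v l : ℝ} (hfin : (S ∩ Set.Ioc 0 v).Finite)
    (hu : 0 ≤ u) (hul : u < l) (hlv : l ≤ v) (hl : l ∈ S) :
    ((S ∩ Set.Ioc 0 u).ncard : ℝ) + 1 ≤ (S ∩ Set.Ioc 0 v).ncard := by
  have hssub : S ∩ Set.Ioc 0 u ⊂ S ∩ Set.Ioc 0 v := by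
    refine ⟨Set.inter_subset_inter_right S (Set.Ioc_subset_Ioc_right (hul.le.trans hlv)),
      fun hsub => ?_⟩
    exact (hsub ⟨hl, hu.trans_lt hul, hlv⟩).2.2.not_gt hul
  exact_mod_cast Set.ncard_lt_ncard hssub hfin

theorem exists_map_val_eq {μ : Measure ℝ} (hμ : μ (Set.Icc 0 1)ᶜ = 0) :
    ∃ m : Measure I, m.map (↑) = μ ∧ ∀ x : I, m (Set.Iic x) = μ (Set.Icc 0 x) := by
  refine ⟨μ.comap (↑), ?_, fun x => ?_⟩
  · rw [map_comap_subtype_coe measurableSet_Icc]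
    exact Measure.restrict_eq_self_of_ae_mem hμ
  · rw [(MeasurableEmbedding.subtype_coe measurableSet_Icc).comap_apply,
      Set.image_subtype_val_Icc_Iic]

variable {κ : ℕ} {a b : ℝ} {P : ℝ → ℝ} {m : Measure I} [IsProbabilityMeasure m]

theorem CantorType.nullSingletonClass_map_val (hP : CantorType κ a b P)
    (hm : ∀ x : I, m.real (Set.Iic x) = P x) : NullSingletonClass (m.map ((↑) : I → ℝ)) := by
  have hprob := Measure.isProbabilityMeasure_map (μ := m) (f := ((↑) : I → ℝ)) (by fun_prop)
  have hcdf (x : ℝ) : (m.map ((↑) : I → ℝ)).real (Set.Iic x) =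
      Set.IccExtend zero_le_one (fun t : I => P t) x := by
    rw [map_measureReal_apply measurable_subtype_coe measurableSet_Iic]
    rcases lt_or_ge x 0 with hx | hx
    · have hpre : ((↑) : I → ℝ) ⁻¹' Set.Iic x = ∅ :=
        Set.eq_empty_of_forall_notMem fun t ht => (hx.trans_le t.2.1).not_ge ht
      rw [hpre, measureReal_empty, Set.IccExtend_of_le_left zero_le_one _ hx.le, hP.2.1]
    · have hpre : ((↑) : I → ℝ) ⁻¹' Set.Iic x = Set.Iic (Set.projIcc 0 1 zero_le_one x) := by
        ext t
        simp [← Subtype.coe_le_coe, Set.coe_projIcc, t.2.2, hx]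
      rw [hpre, hm]
      rfl
  refine nullSingletonClass_of_continuous_measureReal_Iic ?_
  simp only [hcdf]
  exact (continuousOn_iff_continuous_domRestrict.mp hP.1).Icc_extend'

theorem CantorType.exists_isProbabilityMeasure (hP : CantorType κ a b P)
    (hmono : MonotoneOn P (Set.Icc 0 1)) {μ : Measure ℝ}
    (hμ : ∀ x ∈ Set.Icc (0 : ℝ) 1, μ (Set.Icc 0 x) = ENNReal.ofReal (P x))
    (hμc : μ (Set.Icc (0 : ℝ) 1)ᶜ = 0) :
    ∃ m : Measure I, IsProbabilityMeasure m ∧ m.map (↑) = μ ∧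
      ∀ x : I, m.real (Set.Iic x) = P x := by
  obtain ⟨m, hmap, hm⟩ := exists_map_val_eq hμc
  have hIic (x : I) : m (Set.Iic x) = ENNReal.ofReal (P x) := (hm x).trans (hμ x x.2)
  have huniv : m Set.univ = 1 := by
    rw [← Set.Iic_top, hIic, Set.Icc.coe_top, hP.2.2.1, ENNReal.ofReal_one]
  refine ⟨m, ⟨huniv⟩, hmap, fun x => ?_⟩
  have hnonneg : 0 ≤ P x := hP.2.1.ge.trans (hmono (by simp) x.2 x.2.1)
  rw [measureReal_def, hIic, ENNReal.toReal_ofReal hnonneg]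

end Eigenvalues

theorem asymptotic_coefficient_nonconstant (κ : ℕ) (a b : ℝ) (hκ : 2 ≤ κ)
    (ha : 0 < a) (ha' : a < 1 / κ) (hb : b = (1 - κ * a) / (κ - 1))
    (D ν : ℝ) (hD : D = Real.log κ / Real.log (κ / a)) (hν : ν = Real.log (κ / a))
    (P : ℝ → ℝ) (hP : CantorType κ a b P) (hPmono : MonotoneOn P (Set.Icc 0 1))
    (μ : Measure ℝ)
    (hμ : ∀ x ∈ Set.Icc (0 : ℝ) 1, μ (Set.Icc 0 x) = ENNReal.ofReal (P x))
    (hμc : μ (Set.Icc (0 : ℝ) 1)ᶜ = 0)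
    (hfin : ∀ Λ : ℝ, 0 < Λ → ({l : ℝ | IsDirichletEigen μ l} ∩ Set.Ioc 0 Λ).Finite)
    (s : ℝ → ℝ) (hs : Continuous s) (hper : Function.Periodic s ν)
    (hasymp : Filter.Tendsto
      (fun Λ : ℝ => (({l : ℝ | IsDirichletEigen μ l} ∩ Set.Ioc 0 Λ).ncard : ℝ) / Λ ^ D
        - s (Real.log Λ))
      Filter.atTop (nhds 0)) :
    ¬ ∃ c : ℝ, ∀ t : ℝ, s t = c := by
  rintro ⟨c, hc⟩
  subst hD
  have hp : CantorParams κ a b := cantorParams_of_lt hκ ha ha' hb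
  obtain ⟨hD_nonneg, hD_le_one⟩ := hp.log_div_log_mem_Icc
  obtain ⟨m, hm_prob, rfl, hm⟩ := hP.exists_isProbabilityMeasure hPmono hμ hμc
  have := hP.nullSingletonClass_map_val hm
  refine KreinString.not_tendsto_div_rpow hp (hP.isSelfSimilar hp hm)
    (fun u v l hu hul hlv hl => ?_) (IsProbabilityMeasure.ne_zero m) hD_nonneg hD_le_one
    hp.ratio_rpow_log_div_log (by simpa [hc] using hasymp.add_const c)
  exact ncard_inter_Ioc_add_one_le (hfin v (hu.trans_lt (hul.trans_le hlv))) hu hul hlv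
    (isDirichletEigen_of_sinValue_eq_zero hl)
end

section
/- Let λ > 0 and let y, g : [0,1] → ℝ be continuous functions with y not identically zero, satisfying y(x) = y(0) + ∫₀ˣ g(t) dt and g(x) = g(0) − λ·∫_{[0,x]} y dμ for all x ∈ [0,1], together with the Neumann conditions g(0) = g(1) = 0, where μ is the Lebesgue–Stieltjes measure of the Cantor-type self-similar function P with parameters κ, a, b. Then (κ/a)·λ is again an eigenvalue of the same Neumann problem: there exist continuous z, h : [0,1] → ℝ with z not identically zero satisfying z(x) = z(0) + ∫₀ˣ h(t) dt, h(x) = h(0) − (κ/a)·λ·∫_{[0,x]} z dμ for all x ∈ [0,1], and h(0) = h(1) = 0. -/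
open MeasureTheory

/-- `lam` is an eigenvalue of the boundary value problem
`-y'' - λ ρ y = 0`, `y⁽¹⁾(0) - γ₀ y(0) = 0`, `y⁽¹⁾(1) + γ₁ y(1) = 0`, where `ρ` is the
distributional derivative of the function whose Lebesgue–Stieltjes measure is `μ`:
there are continuous `y, g : [0,1] → ℝ`, `y` not identically zero, with
`y(x) = y(0) + ∫₀ˣ g`, `g(x) = g(0) - λ ∫_{[0,x]} y dμ`, and
`g(0) - γ₀ y(0) = 0`, `g(1) + γ₁ y(1) = 0`. -/
def IsEigen (μ : Measure ℝ) (γ₀ γ₁ lam : ℝ) : Prop :=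
  ∃ y g : ℝ → ℝ, ContinuousOn y (Set.Icc 0 1) ∧ ContinuousOn g (Set.Icc 0 1) ∧
    (∃ x ∈ Set.Icc (0 : ℝ) 1, y x ≠ 0) ∧
    (∀ x ∈ Set.Icc (0 : ℝ) 1, y x = y 0 + ∫ t in (0 : ℝ)..x, g t) ∧
    (∀ x ∈ Set.Icc (0 : ℝ) 1, g x = g 0 - lam * ∫ t in Set.Icc (0 : ℝ) x, y t ∂μ) ∧
    g 0 - γ₀ * y 0 = 0 ∧ g 1 + γ₁ * y 1 = 0

/-!
A Neumann eigenfunction on `[l, r]` extends to the whole line: its derivative `g` vanishes off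
`(l, r)`, so the eigenfunction is continued by constants. In this form the Neumann problem behaves
well under three operations. Rescaling by `t ↦ p + a * t` pushes `μ` forward and divides the
eigenvalue by `a`; solutions on consecutive intervals whose values agree at the two ends of each
gap glue to a solution for the sum of the measures; and a solution for `w • μ` with eigenvalue
`lam` is one for `μ` with eigenvalue `w * lam`.

Self-similarity of `P` says that `κ • μ` is the sum of the `κ` copies of `μ` pushed forward to
`[k(a+b), k(a+b) + a]`. Since the copies of `y` may be multiplied by coefficients with
`c k * y 1 = c (k+1) * y 0`, they glue to an eigenfunction for `κ • μ` with eigenvalue `lam / a`,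
that is, for `μ` with eigenvalue `κ / a * lam`.
-/

section NeumannPair

open Set NNReal

lemma Iic_ae_eq_Icc_of_ae_mem {α : Type*} [LinearOrder α] [MeasurableSpace α] {μ : Measure α}
    {l r : α} (hμ : ∀ᵐ t ∂μ, t ∈ Icc l r) (x : α) :
    Iic x =ᵐ[μ] Icc l (min r x) := by
  filter_upwards [hμ] with t ht
  exact propext ⟨fun htx => ⟨ht.1, le_min ht.2 htx⟩, fun h => h.2.trans (min_le_right r x)⟩

lemma integrable_of_continuous_of_ae_mem_isCompact {X E : Type*} [TopologicalSpace X] [T2Space X]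
    [MeasurableSpace X] [OpensMeasurableSpace X] [NormedAddCommGroup E]
    [SecondCountableTopologyEither X E] {μ : Measure X} [IsFiniteMeasureOnCompacts μ] {K : Set X}
    (hK : IsCompact K) (hμ : ∀ᵐ t ∂μ, t ∈ K) {f : X → E} (hf : Continuous f) :
    Integrable f μ := by
  rw [← Measure.restrict_eq_self_of_ae_mem hμ]
  exact hf.continuousOn.integrableOn_compact hK

lemma exists_seq_mul_eq_succ_mul {K : Type*} [Field K] (u v : K) (n : ℕ) :
    ∃ c : ℕ → K, (∀ k < n, c k * v = c (k + 1) * u) ∧ ∃ j ≤ n, c j ≠ 0 := by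
  by_cases hu : u = 0
  · refine ⟨Pi.single n 1, fun k hk => ?_, n, le_rfl, by simp⟩
    rw [Pi.single_eq_of_ne hk.ne, hu, zero_mul, mul_zero]
  · refine ⟨fun k => (v / u) ^ k, fun k _ => ?_, 0, n.zero_le, by simp⟩
    simp only [pow_succ, mul_assoc, div_mul_cancel₀ v hu]

/-- `y` is a solution of the Neumann problem `-y'' = lam * μ * y` on `[l, r]`, where `μ` is carried
by `[l, r]`, and `g` is its derivative. Both functions live on the whole line: off `(l, r)` the
derivative is zero, which encodes the boundary conditions and makes `y` constant there. -/
structure IsNeumannPair (μ : Measure ℝ) (l r lam : ℝ) (y g : ℝ → ℝ) : Prop where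
  le : l ≤ r
  ae_mem : ∀ᵐ t ∂μ, t ∈ Icc l r
  hasDerivAt : ∀ x, HasDerivAt y (g x) x
  continuous_deriv : Continuous g
  deriv_eq : ∀ x, g x = -lam * ∫ t in Iic x, y t ∂μ
  deriv_eq_zero_of_le : ∀ x ≤ l, g x = 0
  deriv_eq_zero_of_ge : ∀ x, r ≤ x → g x = 0

namespace IsNeumannPair

variable {μ ν : Measure ℝ} {l r l' r' lam : ℝ} {y g y' g' : ℝ → ℝ}

lemma continuous (h : IsNeumannPair μ l r lam y g) : Continuous y :=
  continuous_iff_continuousAt.2 fun x => (h.hasDerivAt x).continuousAt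

lemma eq_add_integral (h : IsNeumannPair μ l r lam y g) (u x : ℝ) :
    y x = y u + ∫ t in u..x, g t := by
  rw [intervalIntegral.integral_eq_sub_of_hasDerivAt (fun t _ => h.hasDerivAt t)
    (h.continuous_deriv.intervalIntegrable u x), add_sub_cancel]

lemma eq_left_of_le (h : IsNeumannPair μ l r lam y g) {x : ℝ} (hx : x ≤ l) : y x = y l := by
  have hzero : EqOn g 0 (uIcc l x) := fun t ht =>
    h.deriv_eq_zero_of_le t (uIcc_of_ge hx ▸ ht).2
  rw [h.eq_add_integral l x, intervalIntegral.integral_congr hzero]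
  simp

lemma eq_right_of_ge (h : IsNeumannPair μ l r lam y g) {x : ℝ} (hx : r ≤ x) : y x = y r := by
  have hzero : EqOn g 0 (uIcc r x) := fun t ht =>
    h.deriv_eq_zero_of_ge t (uIcc_of_le hx ▸ ht).1
  rw [h.eq_add_integral r x, intervalIntegral.integral_congr hzero]
  simp

lemma deriv_eq_sub_setIntegral_Icc (h : IsNeumannPair μ l r lam y g) {x : ℝ} (hx : x ≤ r) :
    g x = g l - lam * ∫ t in Icc l x, y t ∂μ := by
  have hIic := Iic_ae_eq_Icc_of_ae_mem h.ae_mem x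
  rw [min_eq_right hx] at hIic
  rw [h.deriv_eq x, h.deriv_eq_zero_of_le l le_rfl, setIntegral_congr_set hIic]
  ring

lemma exists_eqOn_of_interval (hlr : l ≤ r) (hμ : ∀ᵐ t ∂μ, t ∈ Icc l r)
    (hg : ContinuousOn g (Icc l r))
    (hyint : ∀ x ∈ Icc l r, y x = y l + ∫ t in l..x, g t)
    (hgint : ∀ x ∈ Icc l r, g x = g l - lam * ∫ t in Icc l x, y t ∂μ)
    (hgl : g l = 0) (hgr : g r = 0) :
    ∃ Y G, IsNeumannPair μ l r lam Y G ∧ EqOn Y y (Icc l r) := by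
  set G : ℝ → ℝ := IccExtend hlr ((Icc l r).domRestrict g)
  set Y : ℝ → ℝ := fun x => y l + ∫ t in l..x, G t
  have hGc : Continuous G := hg.domRestrict.Icc_extend'
  have hGle : ∀ x ≤ l, G x = 0 := fun x hx => (IccExtend_of_le_left hlr _ hx).trans hgl
  have hGge : ∀ x, r ≤ x → G x = 0 := fun x hx => (IccExtend_of_right_le hlr _ hx).trans hgr
  have hGg : EqOn G g (Icc l r) := fun x hx => IccExtend_of_mem hlr _ hx
  have hYy : EqOn Y y (Icc l r) := fun x hx => by
    have hsub : uIcc l x ⊆ Icc l r := uIcc_of_le hx.1 ▸ Icc_subset_Icc_right hx.2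
    rw [hyint x hx, ← intervalIntegral.integral_congr (hGg.mono hsub)]
  refine ⟨Y, G, ⟨hlr, hμ, fun x => ?_, hGc, fun x => ?_, hGle, hGge⟩, hYy⟩
  · exact (hGc.integral_hasStrictDerivAt l x).hasDerivAt.const_add (y l)
  · rw [setIntegral_congr_set (Iic_ae_eq_Icc_of_ae_mem hμ x)]
    rcases lt_or_ge x l with hx | hx
    · rw [hGle x hx.le, Icc_eq_empty (by simp [hx])]
      simp
    · have hmem : min r x ∈ Icc l r := ⟨le_min hlr hx, min_le_left r x⟩
      have hGmin : G x = g (min r x) :=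
        congrArg g (max_eq_right hmem.1)
      rw [hGmin, hgint _ hmem, hgl, setIntegral_congr_fun measurableSet_Icc
        (hYy.mono (Icc_subset_Icc_right hmem.2))]
      ring

lemma const_mul (h : IsNeumannPair μ l r lam y g) (c : ℝ) :
    IsNeumannPair μ l r lam (fun x => c * y x) (fun x => c * g x) where
  le := h.le
  ae_mem := h.ae_mem
  hasDerivAt x := (h.hasDerivAt x).const_mul c
  continuous_deriv := h.continuous_deriv.const_mul c
  deriv_eq x := by rw [integral_const_mul, h.deriv_eq x]; ring
  deriv_eq_zero_of_le x hx := by rw [h.deriv_eq_zero_of_le x hx, mul_zero]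
  deriv_eq_zero_of_ge x hx := by rw [h.deriv_eq_zero_of_ge x hx, mul_zero]

lemma of_smul_measure {w : ℝ≥0} (hw : w ≠ 0) (h : IsNeumannPair (w • μ) l r lam y g) :
    IsNeumannPair μ l r (w * lam) y g where
  __ := h
  ae_mem := (Measure.ae_smul_measure_iff hw).1 h.ae_mem
  deriv_eq x := by
    rw [h.deriv_eq x, Measure.restrict_smul, integral_smul_nnreal_measure, NNReal.smul_def,
      smul_eq_mul]
    ring

lemma map_affine (h : IsNeumannPair μ l r lam y g) {a : ℝ} (ha : 0 < a) (p : ℝ) :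
    IsNeumannPair (μ.map fun t => p + a * t) (p + a * l) (p + a * r) (lam / a)
      (fun x => y ((x - p) / a)) (fun x => g ((x - p) / a) / a) where
  le := by gcongr; exact h.le
  ae_mem := by
    refine (ae_map_iff (by fun_prop) measurableSet_Icc).2 ?_
    filter_upwards [h.ae_mem] with t ht
    constructor <;> gcongr
    exacts [ht.1, ht.2]
  hasDerivAt x := by
    have hinv : HasDerivAt (fun x => (x - p) / a) (1 / a) x :=
      ((hasDerivAt_id x).sub_const p).div_const a
    exact mul_one_div (g ((x - p) / a)) a ▸ (h.hasDerivAt ((x - p) / a)).comp x hinv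
  continuous_deriv := (h.continuous_deriv.comp (by fun_prop)).div_const a
  deriv_eq x := by
    have hpre : (fun t => p + a * t) ⁻¹' Iic x = Iic ((x - p) / a) := by
      ext t
      rw [mem_preimage, mem_Iic, mem_Iic, le_div_iff₀' ha, le_sub_iff_add_le']
    have hy : Continuous fun x => y ((x - p) / a) := h.continuous.comp (by fun_prop)
    rw [setIntegral_map measurableSet_Iic hy.aestronglyMeasurable (by fun_prop), hpre,
      h.deriv_eq]
    simp only [add_sub_cancel_left, mul_div_cancel_left₀ _ ha.ne']
    ring
  deriv_eq_zero_of_le x hx := by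
    rw [h.deriv_eq_zero_of_le _ (by rwa [div_le_iff₀' ha, sub_le_iff_le_add']), zero_div]
  deriv_eq_zero_of_ge x hx := by
    rw [h.deriv_eq_zero_of_ge _ (by rwa [le_div_iff₀' ha, le_sub_iff_add_le']), zero_div]

lemma glue_eqOn_Iic (h' : IsNeumannPair ν l' r' lam y' g') (hgap : r ≤ l') :
    EqOn (fun x => y x + (y' x - y' l')) y (Iic r) := fun x (hx : x ≤ r) => by
  simp only [h'.eq_left_of_le (hx.trans hgap), sub_self, add_zero]

lemma glue_eqOn_Ici (h : IsNeumannPair μ l r lam y g) (hgap : r ≤ l')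
    (hval : y r = y' l') : EqOn (fun x => y x + (y' x - y' l')) y' (Ici l') :=
  fun x (hx : l' ≤ x) => by
    simp only [h.eq_right_of_ge (hgap.trans hx), hval, add_sub_cancel]

lemma glue [IsFiniteMeasure μ] [IsFiniteMeasure ν] (h : IsNeumannPair μ l r lam y g)
    (h' : IsNeumannPair ν l' r' lam y' g') (hgap : r ≤ l') (hval : y r = y' l') :
    IsNeumannPair (μ + ν) l r' lam (fun x => y x + (y' x - y' l')) (fun x => g x + g' x) where
  le := h.le.trans (hgap.trans h'.le)
  ae_mem := ae_add_measure_iff.2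
    ⟨h.ae_mem.mono fun _ ht => ⟨ht.1, ht.2.trans (hgap.trans h'.le)⟩,
      h'.ae_mem.mono fun _ ht => ⟨(h.le.trans hgap).trans ht.1, ht.2⟩⟩
  hasDerivAt x := (h.hasDerivAt x).add ((h'.hasDerivAt x).sub_const (y' l'))
  continuous_deriv := h.continuous_deriv.add h'.continuous_deriv
  deriv_eq x := by
    have hcont : Continuous fun x => y x + (y' x - y' l') :=
      h.continuous.add (h'.continuous.sub continuous_const)
    have hμ : ∫ t in Iic x, y t + (y' t - y' l') ∂μ = ∫ t in Iic x, y t ∂μ :=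
      integral_congr_ae <| ae_restrict_of_ae <| h.ae_mem.mono fun _ ht =>
        h'.glue_eqOn_Iic hgap ht.2
    have hν : ∫ t in Iic x, y t + (y' t - y' l') ∂ν = ∫ t in Iic x, y' t ∂ν :=
      integral_congr_ae <| ae_restrict_of_ae <| h'.ae_mem.mono fun _ ht =>
        h.glue_eqOn_Ici hgap hval ht.1
    have hint {ρ : Measure ℝ} [IsFiniteMeasure ρ] {p q : ℝ} (hρ : ∀ᵐ t ∂ρ, t ∈ Icc p q) :
        IntegrableOn (fun t => y t + (y' t - y' l')) (Iic x) ρ :=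
      (integrable_of_continuous_of_ae_mem_isCompact isCompact_Icc hρ hcont).integrableOn
    rw [Measure.restrict_add, integral_add_measure (hint h.ae_mem) (hint h'.ae_mem), hμ, hν,
      h.deriv_eq, h'.deriv_eq]
    ring
  deriv_eq_zero_of_le x hx := by
    rw [h.deriv_eq_zero_of_le x hx, h'.deriv_eq_zero_of_le x (hx.trans (h.le.trans hgap)), add_zero]
  deriv_eq_zero_of_ge x hx := by
    rw [h.deriv_eq_zero_of_ge x ((hgap.trans h'.le).trans hx), h'.deriv_eq_zero_of_ge x hx,
      add_zero]

lemma exists_glue_range {ν : ℕ → Measure ℝ} [∀ k, IsFiniteMeasure (ν k)] {l r : ℕ → ℝ}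
    {y g : ℕ → ℝ → ℝ} (h : ∀ k, IsNeumannPair (ν k) (l k) (r k) lam (y k) (g k))
    (hgap : ∀ k, r k ≤ l (k + 1)) (n : ℕ) (hval : ∀ k < n, y k (r k) = y (k + 1) (l (k + 1))) :
    ∃ Y G, IsNeumannPair (∑ k ∈ Finset.range (n + 1), ν k) (l 0) (r n) lam Y G ∧
      ∀ k ≤ n, EqOn Y (y k) (Icc (l k) (r k)) := by
  have hr : Monotone r := monotone_nat_of_le_succ fun k => (hgap k).trans (h (k + 1)).le
  induction n with
  | zero =>
    refine ⟨y 0, g 0, by simpa using h 0, fun k hk => ?_⟩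
    rw [Nat.le_zero.1 hk]
    exact eqOn_refl _ _
  | succ n ih =>
    obtain ⟨Y, G, hYG, hYy⟩ := ih fun k hk => hval k (hk.trans n.lt_succ_self)
    have hmatch : Y (r n) = y (n + 1) (l (n + 1)) :=
      (hYy n le_rfl (right_mem_Icc.2 (h n).le)).trans (hval n n.lt_succ_self)
    rw [Finset.sum_range_succ]
    refine ⟨_, _, hYG.glue (h (n + 1)) (hgap n) hmatch, fun k hk => ?_⟩
    rcases Nat.le_succ_iff.1 hk with hkn | rfl
    · exact (((h (n + 1)).glue_eqOn_Iic (hgap n)).mono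
        fun x hx => hx.2.trans (hr hkn)).trans (hYy k hkn)
    · exact (hYG.glue_eqOn_Ici (hgap n) hmatch).mono fun x hx => hx.1

theorem exists_of_selfSimilar [IsFiniteMeasure μ] {n : ℕ} {a d : ℝ} (ha : 0 < a)
    (had : a ≤ d) (hd : n * d + a = 1)
    (hμ : ((n + 1 : ℕ) : ℝ≥0) • μ = ∑ k ∈ Finset.range (n + 1), μ.map fun t => k * d + a * t)
    (h : IsNeumannPair μ 0 1 lam y g) (hy : ∃ x ∈ Icc (0 : ℝ) 1, y x ≠ 0) :
    ∃ z f, IsNeumannPair μ 0 1 ((n + 1 : ℕ) / a * lam) z f ∧ ∃ x ∈ Icc (0 : ℝ) 1, z x ≠ 0 := by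
  obtain ⟨c, hc, j, hjn, hcj⟩ := exists_seq_mul_eq_succ_mul (y 0) (y 1) n
  have hcopy : ∀ k : ℕ, IsNeumannPair (μ.map fun t => k * d + a * t) (k * d + a * 0)
      (k * d + a * 1) (lam / a) (fun x => c k * y ((x - k * d) / a))
      (fun x => c k * (g ((x - k * d) / a) / a)) :=
    fun k => (h.map_affine ha (k * d)).const_mul (c k)
  have hgap : ∀ k : ℕ, k * d + a * 1 ≤ ((k + 1 : ℕ) : ℝ) * d + a * 0 := fun k => by
    push_cast
    linarith
  have hval : ∀ k < n, c k * y ((k * d + a * 1 - k * d) / a) =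
      c (k + 1) * y ((((k + 1 : ℕ) : ℝ) * d + a * 0 - ((k + 1 : ℕ) : ℝ) * d) / a) := fun k hk => by
    simpa only [add_sub_cancel_left, mul_div_cancel_left₀ _ ha.ne'] using hc k hk
  obtain ⟨z, f, hzf, hz⟩ := exists_glue_range hcopy hgap n hval
  rw [← hμ] at hzf
  refine ⟨z, f, ?_, ?_⟩
  · convert hzf.of_smul_measure (Nat.cast_ne_zero.2 n.succ_ne_zero) using 1
    · simp
    · rw [mul_one, hd]
    · rw [NNReal.coe_natCast]
      ring
  · obtain ⟨x, hx, hyx⟩ := hy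
    have hjd : (j : ℝ) * d ≤ n * d := by gcongr; exact ha.le.trans had
    have hax : 0 ≤ a * x ∧ a * x ≤ a := ⟨mul_nonneg ha.le hx.1, mul_le_of_le_one_right ha.le hx.2⟩
    have hj0 : 0 ≤ (j : ℝ) * d := mul_nonneg j.cast_nonneg (ha.le.trans had)
    refine ⟨j * d + a * x, ⟨by linarith, by linarith⟩, ?_⟩
    rw [hz j hjn ⟨by linarith, by linarith⟩]
    simpa only [add_sub_cancel_left, mul_div_cancel_left₀ _ ha.ne'] using mul_ne_zero hcj hyx

end IsNeumannPair

end NeumannPair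

section CantorType

open Set NNReal

lemma apply_clamp_eq_add_sum_of_const_on_gaps {α E : Type*} [LinearOrder α]
    [AddCommGroup E] {F : α → E} {p q : ℕ → α} (hpq : ∀ k, p k ≤ q k)
    (hqp : ∀ k, q k ≤ p (k + 1)) (n : ℕ)
    (hF : ∀ k < n, ∀ x ∈ Icc (q k) (p (k + 1)), F x = F (q k)) (x : α) :
    F (max (p 0) (min (q n) x)) =
      F (p 0) + ∑ k ∈ Finset.range (n + 1), (F (max (p k) (min (q k) x)) - F (p k)) := by
  have hq : Monotone q := monotone_nat_of_le_succ fun k => (hqp k).trans (hpq (k + 1))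
  induction n with
  | zero => simp
  | succ n ih =>
    have h0 : p 0 ≤ q n := (hpq 0).trans (hq n.zero_le)
    rw [Finset.sum_range_succ, ← add_assoc, ← ih fun k hk => hF k (hk.trans n.lt_succ_self)]
    rcases le_total x (p (n + 1)) with hx | hx
    · rw [min_eq_right (hx.trans (hpq _)), max_eq_left hx, sub_self, add_zero]
      rcases le_total x (q n) with hxq | hxq
      · rw [min_eq_right hxq]
      · rw [min_eq_left hxq, max_eq_right h0, max_eq_right (h0.trans hxq)]
        exact hF n n.lt_succ_self x ⟨hxq, hx⟩
    · have hmin : p (n + 1) ≤ min (q (n + 1)) x := le_min (hpq _) hx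
      rw [min_eq_left ((hqp n).trans hx), max_eq_right h0, max_eq_right hmin,
        max_eq_right ((h0.trans (hqp n)).trans hmin),
        hF n n.lt_succ_self _ (right_mem_Icc.2 (hqp n)), add_sub_cancel]

lemma max_min_add_eq_add_mul_max_min {K : Type*} [Field K] [LinearOrder K]
    [IsStrictOrderedRing K] {a : K} (ha : 0 < a) (p x : K) :
    max p (min (p + a) x) = p + a * max 0 (min 1 ((x - p) / a)) := by
  rw [mul_max_of_nonneg _ _ ha.le, mul_min_of_nonneg _ _ ha.le, mul_div_cancel₀ _ ha.ne',
    ← max_add_add_left, ← min_add_add_left, mul_zero, mul_one, add_zero, add_sub_cancel]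

variable {n : ℕ} {a b : ℝ} {P : ℝ → ℝ}

lemma gap_pos (hn : 0 < n) (ha : a < 1 / (n + 1 : ℕ))
    (hb : b = (1 - (n + 1 : ℕ) * a) / ((n + 1 : ℕ) - 1)) : 0 < b := by
  rw [lt_div_iff₀' (by positivity)] at ha
  rw [hb]
  exact div_pos (sub_pos.2 ha) (by simpa using hn)

lemma mul_add_gap_add_eq_one (hn : n ≠ 0)
    (hb : b = (1 - (n + 1 : ℕ) * a) / ((n + 1 : ℕ) - 1)) : n * (a + b) + a = 1 := by
  push_cast at hb
  rw [hb, add_sub_cancel_right]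
  field_simp
  ring

lemma CantorType.eq_left_of_mem_gap (hP : CantorType (n + 1) a b P) (ha : 0 < a) (hb : 0 < b)
    (hab : n * (a + b) + a = 1) {k : ℕ} (hk : k < n) {x : ℝ}
    (hx : x ∈ Icc (k * (a + b) + a) ((k + 1 : ℕ) * (a + b))) : P x = P (k * (a + b) + a) := by
  obtain ⟨hcont, -, -, hgap, -⟩ := hP
  obtain ⟨c, hc⟩ := hgap (k + 1) k.succ_pos hk
  have hlt : (k : ℝ) * (a + b) + a < (k + 1 : ℕ) * (a + b) := by push_cast; linarith
  have hle : ((k + 1 : ℕ) : ℝ) * (a + b) ≤ n * (a + b) := by gcongr; exact hk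
  have hsub : Icc ((k : ℝ) * (a + b) + a) ((k + 1 : ℕ) * (a + b)) ⊆ Icc 0 1 :=
    Icc_subset_Icc (by positivity) (by linarith)
  rw [Nat.cast_succ, add_sub_cancel_right, ← Nat.cast_succ] at hc
  have hconst : EqOn P (fun _ => c) (Icc ((k : ℝ) * (a + b) + a) ((k + 1 : ℕ) * (a + b))) :=
    EqOn.of_subset_closure hc (hcont.mono hsub) continuousOn_const Ioo_subset_Icc_self
      (closure_Ioo hlt.ne).ge
  rw [hconst hx, hconst (left_mem_Icc.2 hlt.le)]

lemma CantorType.mul_sub_eq (hP : CantorType (n + 1) a b P) {k : ℕ} (hk : k ≤ n) {x : ℝ}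
    (hx : x ∈ Icc (0 : ℝ) 1) :
    ((n + 1 : ℕ) : ℝ) * (P (k * (a + b) + a * x) - P (k * (a + b))) = P x := by
  obtain ⟨-, hP0, -, -, hsim⟩ := hP
  obtain ⟨c, hc⟩ := hsim k hk
  have hc0 := hc 0 (by simp)
  rw [mul_zero, add_zero, hP0] at hc0
  rw [mul_sub, hc x hx, hc0]
  ring

lemma CantorType.mul_clamp_eq_sum (hP : CantorType (n + 1) a b P) (ha : 0 < a) (hb : 0 < b)
    (hab : n * (a + b) + a = 1) (x : ℝ) :
    ((n + 1 : ℕ) : ℝ) * P (max 0 (min 1 x)) =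
      ∑ k ∈ Finset.range (n + 1), P (max 0 (min 1 ((x - k * (a + b)) / a))) := by
  have hsum := apply_clamp_eq_add_sum_of_const_on_gaps (F := P) (p := fun k => k * (a + b))
    (q := fun k => k * (a + b) + a) (fun k => by linarith) (fun k => by push_cast; linarith) n
    (fun k hk x hx => hP.eq_left_of_mem_gap ha hb hab hk hx) x
  simp only [Nat.cast_zero, zero_mul, hab, hP.2.1, zero_add] at hsum
  rw [hsum, Finset.mul_sum]
  refine Finset.sum_congr rfl fun k hk => ?_
  rw [max_min_add_eq_add_mul_max_min ha]
  exact hP.mul_sub_eq (Finset.mem_range_succ_iff.1 hk)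
    ⟨le_max_left _ _, max_le zero_le_one (min_le_left _ _)⟩

lemma measure_Iic_eq_ofReal_clamp {μ : Measure ℝ} (hP0 : P 0 = 0)
    (hμ : ∀ x ∈ Icc (0 : ℝ) 1, μ (Icc 0 x) = ENNReal.ofReal (P x))
    (hμc : ∀ᵐ t ∂μ, t ∈ Icc (0 : ℝ) 1) (x : ℝ) :
    μ (Iic x) = ENNReal.ofReal (P (max 0 (min 1 x))) := by
  rw [measure_congr (Iic_ae_eq_Icc_of_ae_mem hμc x)]
  rcases lt_or_ge x 0 with hx | hx
  · rw [Icc_eq_empty (by simp [hx]), max_eq_left ((min_le_right 1 x).trans hx.le), hP0]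
    simp
  · have hmin : 0 ≤ min 1 x := le_min zero_le_one hx
    rw [max_eq_right hmin, hμ _ ⟨hmin, min_le_left 1 x⟩]

theorem CantorType.smul_measure_eq_sum_map (hP : CantorType (n + 1) a b P) (ha : 0 < a)
    (hb : 0 < b) (hab : n * (a + b) + a = 1) (hPmono : MonotoneOn P (Icc 0 1))
    {μ : Measure ℝ} [IsFiniteMeasure μ]
    (hμ : ∀ x ∈ Icc (0 : ℝ) 1, μ (Icc 0 x) = ENNReal.ofReal (P x))
    (hμc : ∀ᵐ t ∂μ, t ∈ Icc (0 : ℝ) 1) :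
    ((n + 1 : ℕ) : ℝ≥0) • μ =
      ∑ k ∈ Finset.range (n + 1), μ.map fun t => k * (a + b) + a * t := by
  have hP0 := hP.2.1
  have hIic := measure_Iic_eq_ofReal_clamp hP0 hμ hμc
  have hnonneg (x : ℝ) : 0 ≤ P (max 0 (min 1 x)) :=
    hP0.ge.trans <| hPmono (left_mem_Icc.2 zero_le_one)
      ⟨le_max_left _ _, max_le zero_le_one (min_le_left _ _)⟩ (le_max_left _ _)
  have hmap (k : ℕ) (x : ℝ) : (μ.map fun t => k * (a + b) + a * t) (Iic x) =
      ENNReal.ofReal (P (max 0 (min 1 ((x - k * (a + b)) / a)))) := by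
    rw [Measure.map_apply (by fun_prop) measurableSet_Iic, ← hIic]
    congr 1
    ext t
    rw [mem_preimage, mem_Iic, mem_Iic, le_div_iff₀' ha, le_sub_iff_add_le']
  refine Measure.ext_of_Iic _ _ fun x => ?_
  calc (((n + 1 : ℕ) : ℝ≥0) • μ) (Iic x)
      = ENNReal.ofReal ((n + 1 : ℕ) * P (max 0 (min 1 x))) := by
        rw [ENNReal.ofReal_mul (Nat.cast_nonneg _), ENNReal.ofReal_natCast, ← hIic]
        rfl
    _ = ∑ k ∈ Finset.range (n + 1),
          ENNReal.ofReal (P (max 0 (min 1 ((x - k * (a + b)) / a)))) := by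
        rw [hP.mul_clamp_eq_sum ha hb hab, ENNReal.ofReal_sum_of_nonneg fun k _ => hnonneg _]
    _ = (∑ k ∈ Finset.range (n + 1), μ.map fun t => k * (a + b) + a * t) (Iic x) := by
        simp only [Measure.finsetSum_apply, hmap]

end CantorType

theorem neumann_eigenvalue_scaling (κ : ℕ) (a b : ℝ) (hκ : 2 ≤ κ)
    (ha : 0 < a) (ha' : a < 1 / κ) (hb : b = (1 - κ * a) / (κ - 1))
    (P : ℝ → ℝ) (hP : CantorType κ a b P) (hPmono : MonotoneOn P (Set.Icc 0 1))
    (μ : Measure ℝ)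
    (hμ : ∀ x ∈ Set.Icc (0 : ℝ) 1, μ (Set.Icc 0 x) = ENNReal.ofReal (P x))
    (hμc : μ (Set.Icc (0 : ℝ) 1)ᶜ = 0)
    (lam : ℝ) (hlam : 0 < lam)
    (y g : ℝ → ℝ) (hy : ContinuousOn y (Set.Icc 0 1)) (hg : ContinuousOn g (Set.Icc 0 1))
    (hy0 : ∃ x ∈ Set.Icc (0 : ℝ) 1, y x ≠ 0)
    (hyint : ∀ x ∈ Set.Icc (0 : ℝ) 1, y x = y 0 + ∫ t in (0 : ℝ)..x, g t)
    (hgint : ∀ x ∈ Set.Icc (0 : ℝ) 1, g x = g 0 - lam * ∫ t in Set.Icc (0 : ℝ) x, y t ∂μ)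
    (hg0 : g 0 = 0) (hg1 : g 1 = 0) :
    ∃ z h : ℝ → ℝ, ContinuousOn z (Set.Icc 0 1) ∧ ContinuousOn h (Set.Icc 0 1) ∧
      (∃ x ∈ Set.Icc (0 : ℝ) 1, z x ≠ 0) ∧
      (∀ x ∈ Set.Icc (0 : ℝ) 1, z x = z 0 + ∫ t in (0 : ℝ)..x, h t) ∧
      (∀ x ∈ Set.Icc (0 : ℝ) 1, h x = h 0 - (κ / a) * lam * ∫ t in Set.Icc (0 : ℝ) x, z t ∂μ) ∧
      h 0 = 0 ∧ h 1 = 0 := by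
  obtain ⟨n, rfl⟩ : ∃ n, κ = n + 1 := ⟨κ - 1, by omega⟩
  have hb0 : 0 < b := gap_pos (by omega) ha' hb
  have hab : n * (a + b) + a = 1 := mul_add_gap_add_eq_one (by omega) hb
  have hmem : ∀ᵐ t ∂μ, t ∈ Set.Icc (0 : ℝ) 1 := hμc
  have : IsFiniteMeasure μ := by
    rw [← Measure.restrict_eq_self_of_ae_mem hmem, isFiniteMeasure_restrict,
      hμ 1 (Set.right_mem_Icc.2 zero_le_one)]
    exact ENNReal.ofReal_ne_top
  have hsim := hP.smul_measure_eq_sum_map ha hb0 hab hPmono hμ hmem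
  obtain ⟨Y, G, hYG, hYy⟩ :=
    IsNeumannPair.exists_eqOn_of_interval zero_le_one hmem hg hyint hgint hg0 hg1
  have hY0 : ∃ x ∈ Set.Icc (0 : ℝ) 1, Y x ≠ 0 :=
    hy0.imp fun x hx => ⟨hx.1, by rw [hYy hx.1]; exact hx.2⟩
  obtain ⟨z, h, hzh, hz0⟩ := hYG.exists_of_selfSimilar ha (by linarith) hab hsim hY0
  exact ⟨z, h, hzh.continuous.continuousOn, hzh.continuous_deriv.continuousOn, hz0,
    fun x _ => hzh.eq_add_integral 0 x, fun x hx => hzh.deriv_eq_sub_setIntegral_Icc hx.2,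
    hzh.deriv_eq_zero_of_le 0 le_rfl, hzh.deriv_eq_zero_of_ge 1 le_rfl⟩
end
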